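/- arXiv:1607.02044 — 8 statements merged into one kernel-verified Lean document; each statement's English description precedes it below -/
import Mathlib

section
/- Let φ : A → B be a local homomorphism of Noetherian local (commutative) rings. Assume that edim(B) ≤ edim(A), that M is a nonzero B-module which is flat as an A-module (via φ), and that either both A and B are Artinian or M is finitely generated as a B-module. Then M is flat as a B-module. -/
/-!
Let `n = edim A`, let `x₁, …, xₙ` be minimal generators of `𝔪_A` and `y₁, …, yₙ` generators of `𝔪_B`
(padded by zeros, as `edim B ≤ n`), and write `x_l = ∑ w_{lj} y_j` in `B`. On the Koszul complex
`K = M ⊗ Λ(Bⁿ)` of `y` with differential `d`, wedging with the row `w_l` is an operator `e_l` with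
`d e_l + e_l d = x_l`. As `K` is a direct sum of copies of `M`, it is flat over `A`, so minimality
of `x` gives Lech independence: `∑ x_k u_k = 0` in `K` forces every `u_k ∈ ∑ x_j K`
(`lech_independent`).

These two facts show that each `1`-cycle of `K` lies in `∑ x_k K + d K`
(`cycle_mem_add_boundary`): a suitable statement about elements `z` with `d z ∈ ∑_{k ∈ S} x_k K` is
proved by enlarging `S` one index at a time, and the process stops because `Λⁿ⁺¹(Bⁿ) = 0`.
Consequently an element of `M ⊗ 𝔪_B` that dies in `M` has the form `∑ u_k ⊗ x_k` with
`∑ x_k u_k = 0`; this relation is trivial by `A`-flatness, so the element vanishes. Hence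
`𝔪_B ⊗ M → M` is injective (`maximalIdeal_rTensor_injective`), i.e. `Tor₁^B(B/𝔪_B, M) = 0`. For
finite `M` the local criterion makes `M` free; for Artinian `B` every finite module is filtered by
copies of the residue field, which gives flatness of an arbitrary `M` (`flat_of_isArtinianRing`).
-/

/-- The embedding dimension of a local ring: the minimal number of generators
of its maximal ideal. -/
noncomputable def edim (R : Type*) [CommRing R] [IsLocalRing R] : ℕ :=
  sInf {n : ℕ | ∃ s : Finset R, s.card = n ∧
    Ideal.span (s : Set R) = IsLocalRing.maximalIdeal R}

open TensorProduct
universe u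

/-- The inductive heart of the argument, for abstract operators: `d` is a differential, `e l` raises
the degree (filtration `F`, zero in degree `n + 1`) and is a homotopy from `x l` to `0`, and `x` is
Lech independent on `K`. If `z` has degree `|S| + 1` and `d z ∈ ∑_{k ∈ S} x_k K`, then
`z ∈ ∑ x_k K + d K`. The case `S = ∅` concerns cycles of degree one. -/
theorem cycle_mem_add_boundary {B K : Type*} [CommRing B] [AddCommGroup K] [Module B K] {n : ℕ}
    (x : Fin n → B) (d : K →ₗ[B] K) (hd : ∀ z, d (d z) = 0)
    (e : Fin n → K →ₗ[B] K) (hde : ∀ l z, d (e l z) = x l • z - e l (d z))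
    (F : ℕ → Submodule B K) (hF : ∀ l i, ∀ z ∈ F i, e l z ∈ F (i + 1)) (hFn : F (n + 1) = ⊥)
    (hx : ∀ u : Fin n → K, ∑ k, x k • u k = 0 → ∀ k, ∃ v : Fin n → K, u k = ∑ j, x j • v j)
    (S : Finset (Fin n)) (z : K) (hz : z ∈ F (S.card + 1)) (u : Fin n → K)
    (huS : ∀ k ∉ S, u k = 0) (hu : d z = ∑ k, x k • u k) :
    ∃ (p : Fin n → K) (q : K), z = ∑ k, x k • p k + d q := by
  induction hm : n - S.card generalizing S z u with
  | zero =>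
    have hS : S.card = n := le_antisymm (by simpa using S.card_le_univ) (by omega)
    rw [hS, hFn, Submodule.mem_bot] at hz
    exact ⟨0, 0, by simp [hz]⟩
  | succ m ih =>
    obtain ⟨l, hl⟩ : ∃ l, l ∉ S := by
      by_contra! h
      have : S = Finset.univ := Finset.eq_univ_of_forall h
      simp [this] at hm
    -- `d (e l z) = x l • z - e l (d z)` lies in the span for `insert l S`, with coefficient `z` at `l`.
    let u' : Fin n → K := fun k => (Pi.single l z : Fin n → K) k - e l (u k)
    have hu' : d (e l z) = ∑ k, x k • u' k := by
      simp only [u', smul_sub, Finset.sum_sub_distrib, hde, hu, map_sum, map_smul]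
      congr 1
      rw [Finset.sum_eq_single l (fun k _ hk => by rw [Pi.single_eq_of_ne hk, smul_zero])
        (by simp), Pi.single_eq_same]
    obtain ⟨p, q, hpq⟩ := ih (insert l S) (e l z)
      (by rw [Finset.card_insert_of_notMem hl]; exact hF _ _ _ hz) u'
      (by
        intro k hk
        simp only [Finset.mem_insert, not_or] at hk
        simp [u', hk.1, huS k hk.2]) hu'
      (by rw [Finset.card_insert_of_notMem hl]; omega)
    -- Applying `d` to the decomposition of `e l z` yields a relation whose `l`-th coefficient is
    -- `z - d (p l)`; Lech independence puts that coefficient into `∑ x_j K`.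
    have hrel : ∑ k, x k • (u' k - d (p k)) = 0 := by
      have h := congrArg d hpq
      rw [map_add, hd, add_zero, hu', map_sum] at h
      simp only [map_smul] at h
      simp [smul_sub, ← h]
    obtain ⟨v, hv⟩ := hx _ hrel l
    refine ⟨v, p l, ?_⟩
    rw [← hv]
    simp [u', huS l hl]

/-- Minimal generators `x` of `𝔪_A` are Lech independent on a flat module: every relation over `A`
is trivial, and the relations of `x` in `A` have coefficients in `𝔪_A`. -/
theorem lech_independent {A N : Type*} [CommRing A] [IsLocalRing A] [AddCommGroup N] [Module A N]
    [Module.Flat A N] {n : ℕ} (x : Fin n → A)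
    (hspan : Ideal.span (Set.range x) = IsLocalRing.maximalIdeal A)
    (hx : ∀ a : Fin n → A, ∑ k, x k * a k = 0 → ∀ k, a k ∈ IsLocalRing.maximalIdeal A)
    (u : Fin n → N) (hu : ∑ k, x k • u k = 0) (k : Fin n) :
    ∃ v : Fin n → N, u k = ∑ j, x j • v j := by
  obtain ⟨m, a, y, hay, hfa⟩ := Module.Flat.isTrivialRelation_of_sum_smul_eq_zero hu
  have h : ∀ j, ∃ c : Fin n → A, ∑ i, c i • x i = a k j := fun j => by
    rw [← Submodule.mem_span_range_iff_exists_fun]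
    exact hspan.ge (hx _ (hfa j) k)
  choose c hc using h
  refine ⟨fun i => ∑ j, c j i • y j, ?_⟩
  simp only [hay, ← hc, Finset.sum_smul, Finset.smul_sum]
  rw [Finset.sum_comm]
  simp only [smul_smul, smul_eq_mul, mul_comm]

section
variable {A B M : Type*} [CommRing A] [CommRing B] [Algebra A B]
  [AddCommGroup M] [Module A M] [Module B M] [IsScalarTower A B M] (n : ℕ)

theorem flat_tensor_exteriorAlgebra [Module.Flat A M] :
    Module.Flat A (M ⊗[B] ExteriorAlgebra B (Fin n → B)) := by
  have : Module.Flat A (Finset (Fin n) →₀ M) :=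
    .of_linearEquiv (finsuppLEquivDirectSum A M (Finset (Fin n)))
  exact Module.Flat.of_linearEquiv ((TensorProduct.equivFinsuppOfBasisRight (M := M)
    (Pi.basisFun B (Fin n)).ExteriorAlgebra).restrictScalars A)

theorem exteriorPower_succ_eq_bot : (⋀[B]^(n+1) (Fin n → B)) = ⊥ := by
  have b := (Pi.basisFun B (Fin n)).exteriorPower (n+1)
  have : IsEmpty (Set.powersetCard (Fin n) (n+1)) := by
    refine ⟨fun s => ?_⟩
    have h := Finset.card_le_univ s.1
    have h2 : s.1.card = n + 1 := s.2
    simp [h2] at h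
  have := b.repr.toEquiv.subsingleton
  exact Submodule.eq_bot_of_subsingleton

theorem ιInv_algebraMap {F : Type*} [AddCommGroup F] [Module B F] (r : B) :
    ExteriorAlgebra.ιInv (algebraMap B (ExteriorAlgebra B F) r) = 0 := by
  -- `ιInv` is defined through `TrivSqZeroExt`, for which the opposite action has to be provided.
  let _ : Module Bᵐᵒᵖ F := Module.compHom _ ((RingHom.id B).fromOpposite mul_comm)
  have : IsCentralScalar B F := ⟨fun r m => rfl⟩
  change TrivSqZeroExt.snd (ExteriorAlgebra.toTrivSqZeroExt _) = 0
  rw [AlgHom.commutes]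
  rfl

theorem ιInv_ι_mul {F : Type*} [AddCommGroup F] [Module B F] (a : F) (q : ExteriorAlgebra B F) :
    ExteriorAlgebra.ιInv (ExteriorAlgebra.ι B a * q) = ExteriorAlgebra.algebraMapInv q • a := by
  let _ : Module Bᵐᵒᵖ F := Module.compHom _ ((RingHom.id B).fromOpposite mul_comm)
  have : IsCentralScalar B F := ⟨fun r m => rfl⟩
  have h : (TrivSqZeroExt.fstHom B B F).comp ExteriorAlgebra.toTrivSqZeroExt =
      ExteriorAlgebra.algebraMapInv := by
    ext; simp [ExteriorAlgebra.algebraMapInv]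
  rw [← h]
  change TrivSqZeroExt.snd (ExteriorAlgebra.toTrivSqZeroExt _) = _
  rw [map_mul]
  simp

/-- The Koszul differential `Λ¹ → Λ⁰` is `Y`, expressed with the projections `algebraMapInv` onto
degree zero and `ιInv` onto degree one. -/
theorem algebraMapInv_contractLeft {F : Type*} [AddCommGroup F] [Module B F] (Y : Module.Dual B F)
    (q : ExteriorAlgebra B F) :
    ExteriorAlgebra.algebraMapInv (CliffordAlgebra.contractLeft (Q := 0) Y q) =
      Y (ExteriorAlgebra.ιInv q) := by
  induction q using CliffordAlgebra.left_induction with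
  | algebraMap r =>
    rw [CliffordAlgebra.contractLeft_algebraMap, map_zero]
    exact (map_zero Y).symm.trans (congrArg Y (ιInv_algebraMap r)).symm
  | add _ _ hx hy => simp only [map_add, hx, hy]
  | ι_mul a m hx =>
    rw [CliffordAlgebra.contractLeft_ι_mul, map_sub, map_mul]
    have h1 : ExteriorAlgebra.algebraMapInv (CliffordAlgebra.ι (0 : QuadraticForm B F) m) = 0 := by
      exact ExteriorAlgebra.lift_ι_apply ..
    have h2 : ExteriorAlgebra.ιInv (CliffordAlgebra.ι (0 : QuadraticForm B F) m * a) =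
      ExteriorAlgebra.algebraMapInv a • m := ιInv_ι_mul m a
    rw [h1, h2, map_smul, map_smul, smul_eq_mul, smul_eq_mul, mul_comm]
    simp

/-- Vanishing of `Tor₁^B(B/𝔪_B, M)`: if `𝔪_B` is generated by as many elements as a system `x` of
minimal generators of `𝔪_A`, then `𝔪_B ⊗ M → M` is injective for `A`-flat `M`. -/
theorem maximalIdeal_rTensor_injective [IsLocalRing A] [IsLocalRing B] [Module.Flat A M]
    (x : Fin n → A) (hspan : Ideal.span (Set.range x) = IsLocalRing.maximalIdeal A)
    (hx : ∀ a : Fin n → A, ∑ k, x k * a k = 0 → ∀ k, a k ∈ IsLocalRing.maximalIdeal A)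
    (y : Fin n → B) (hy : Ideal.span (Set.range y) = IsLocalRing.maximalIdeal B)
    (hloc : ∀ k, algebraMap A B (x k) ∈ IsLocalRing.maximalIdeal B) :
    Function.Injective ((IsLocalRing.maximalIdeal B).subtype.rTensor M) := by
  rw [← LinearMap.lTensor_inj_iff_rTensor_inj, injective_iff_map_eq_zero]
  intro t ht
  have hw : ∀ k, ∃ w : Fin n → B, ∑ j, w j • y j = algebraMap A B (x k) := fun k => by
    rw [← Submodule.mem_span_range_iff_exists_fun]
    exact hy.ge (hloc k)
  choose w hw using hw
  let Y : Module.Dual B (Fin n → B) := Fintype.linearCombination B y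
  have hYm : ∀ v, Y v ∈ IsLocalRing.maximalIdeal B := fun v => by
    rw [← hy]
    exact (Submodule.mem_span_range_iff_exists_fun B).mpr ⟨v, rfl⟩
  let Y' : (Fin n → B) →ₗ[B] IsLocalRing.maximalIdeal B := Y.codRestrict _ hYm
  have hY' : Function.Surjective Y' := by
    rintro ⟨b, hb⟩
    rw [← hy] at hb
    obtain ⟨v, hv⟩ := (Submodule.mem_span_range_iff_exists_fun B).mp hb
    exact ⟨v, Subtype.ext hv⟩
  -- The Koszul differential is contraction with `Y`; the homotopies are left multiplication by `w l`.
  let c : ExteriorAlgebra B (Fin n → B) →ₗ[B] ExteriorAlgebra B (Fin n → B) :=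
    CliffordAlgebra.contractLeft (Q := 0) Y
  let d : M ⊗[B] ExteriorAlgebra B (Fin n → B) →ₗ[B] M ⊗[B] ExteriorAlgebra B (Fin n → B) :=
    c.lTensor M
  have hcc : c ∘ₗ c = 0 := LinearMap.ext fun q => CliffordAlgebra.contractLeft_contractLeft Y q
  have hd : ∀ z, d (d z) = 0 := fun z => by
    rw [← LinearMap.comp_apply, ← LinearMap.lTensor_comp, hcc]; simp
  let e' : Fin n → ExteriorAlgebra B (Fin n → B) →ₗ[B] ExteriorAlgebra B (Fin n → B) := fun l =>
    LinearMap.mulLeft B (ExteriorAlgebra.ι B (w l))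
  let e : Fin n → M ⊗[B] ExteriorAlgebra B (Fin n → B) →ₗ[B] M ⊗[B] ExteriorAlgebra B (Fin n → B) :=
    fun l => (e' l).lTensor M
  have hde' : ∀ l, c ∘ₗ e' l = algebraMap A B (x l) • LinearMap.id - e' l ∘ₗ c := fun l => by
    refine LinearMap.ext fun q => ?_
    rw [← hw l]
    exact CliffordAlgebra.contractLeft_ι_mul Y (w l) q
  have hde : ∀ l z, d (e l z) = algebraMap A B (x l) • z - e l (d z) := fun l z => by
    have := congrArg (fun f => LinearMap.lTensor M f z) (hde' l)
    simpa only [LinearMap.lTensor_comp, LinearMap.lTensor_sub, LinearMap.lTensor_smul,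
      LinearMap.comp_apply, LinearMap.sub_apply, LinearMap.smul_apply, LinearMap.lTensor_id,
      LinearMap.id_apply] using this
  -- `F i` is the degree `i` part of the Koszul complex.
  let F : ℕ → Submodule B (M ⊗[B] ExteriorAlgebra B (Fin n → B)) := fun i =>
    LinearMap.range ((⋀[B]^i (Fin n → B)).subtype.lTensor M)
  have hF : ∀ l i, ∀ z ∈ F i, e l z ∈ F (i + 1) := by
    rintro l i _ ⟨s, rfl⟩
    have hmem : ∀ q : ⋀[B]^i (Fin n → B), e' l q ∈ ⋀[B]^(i + 1) (Fin n → B) := fun q => by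
      rw [ExteriorAlgebra.exteriorPower, pow_succ']
      exact Submodule.mul_mem_mul ⟨_, rfl⟩ q.2
    refine ⟨((e' l ∘ₗ Submodule.subtype _).codRestrict _ hmem).lTensor M s, ?_⟩
    rw [← LinearMap.comp_apply, ← LinearMap.comp_apply, ← LinearMap.lTensor_comp,
      ← LinearMap.lTensor_comp]
    rfl
  have hFn : F (n + 1) = ⊥ := by
    have : (⋀[B]^(n + 1) (Fin n → B)).subtype = 0 := by
      refine LinearMap.ext fun q => ?_
      exact (Submodule.mem_bot B).mp ((exteriorPower_succ_eq_bot n).le q.2)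
    simp [F, this]
  have := flat_tensor_exteriorAlgebra (A := A) (B := B) (M := M) n
  -- Lift the given element of `M ⊗ 𝔪_B` to a Koszul chain `z` of degree one, which is a cycle.
  obtain ⟨s, rfl⟩ := LinearMap.lTensor_surjective M hY' t
  let z : M ⊗[B] ExteriorAlgebra B (Fin n → B) := (ExteriorAlgebra.ι B).lTensor M s
  have hz : z ∈ F 1 := by
    have hmem : ∀ v : Fin n → B, ExteriorAlgebra.ι B v ∈ ⋀[B]^1 (Fin n → B) := fun v => by
      rw [ExteriorAlgebra.exteriorPower, pow_one]
      exact ⟨_, rfl⟩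
    refine ⟨((ExteriorAlgebra.ι B).codRestrict _ hmem).lTensor M s, ?_⟩
    rw [← LinearMap.comp_apply, ← LinearMap.lTensor_comp, LinearMap.subtype_comp_codRestrict]
  have hdz : d z = 0 := by
    have h : c ∘ₗ ExteriorAlgebra.ι B =
        Algebra.linearMap B (ExteriorAlgebra B (Fin n → B)) ∘ₗ
          (IsLocalRing.maximalIdeal B).subtype ∘ₗ Y' := by
      refine LinearMap.ext fun v => CliffordAlgebra.contractLeft_ι _ Y v
    rw [← LinearMap.comp_apply, ← LinearMap.lTensor_comp, h, LinearMap.lTensor_comp,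
      LinearMap.lTensor_comp, LinearMap.comp_apply, LinearMap.comp_apply, ht, map_zero]
  obtain ⟨p, q, hpq⟩ := cycle_mem_add_boundary (fun k => algebraMap A B (x k)) d hd e hde F hF hFn
    (fun u hu k => by
      simp only [algebraMap_smul] at hu ⊢
      exact lech_independent x hspan hx u hu k) ∅ z hz 0 (by simp) (by simpa using hdz)
  -- `π` maps the Koszul complex back to `M ⊗ 𝔪_B` through degree one and kills boundaries.
  let g : ExteriorAlgebra B (Fin n → B) →ₗ[B] IsLocalRing.maximalIdeal B :=
    Y' ∘ₗ ExteriorAlgebra.ιInv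
  let π : M ⊗[B] ExteriorAlgebra B (Fin n → B) →ₗ[B] M ⊗[B] IsLocalRing.maximalIdeal B :=
    g.lTensor M
  have hπd : π (d q) = 0 := by
    have h : g ∘ₗ c = 0 := LinearMap.ext fun q => Subtype.ext <| by
      refine (algebraMapInv_contractLeft Y (c q)).symm.trans ?_
      have : CliffordAlgebra.contractLeft (Q := 0) Y (c q) = 0 :=
        CliffordAlgebra.contractLeft_contractLeft Y q
      rw [this, map_zero]; rfl
    rw [← LinearMap.comp_apply, ← LinearMap.lTensor_comp, h]; simp
  have hπz : π z = Y'.lTensor M s := by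
    have h : g ∘ₗ ExteriorAlgebra.ι B = Y' := LinearMap.ext fun v =>
      congrArg Y' (ExteriorAlgebra.ι_leftInverse v)
    rw [← LinearMap.comp_apply, ← LinearMap.lTensor_comp, h]
  let μ : M ⊗[B] IsLocalRing.maximalIdeal B →ₗ[B] M :=
    TensorProduct.rid B M ∘ₗ (IsLocalRing.maximalIdeal B).subtype.lTensor M
  let ξ : Fin n → IsLocalRing.maximalIdeal B := fun k => ⟨algebraMap A B (x k), hloc k⟩
  -- In `M ⊗ 𝔪_B`, multiplication by `x k ∈ 𝔪_B` factors through the multiplication map `μ`.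
  have hμ : ∀ k τ, algebraMap A B (x k) • τ = μ τ ⊗ₜ[B] ξ k := fun k τ => by
    induction τ with
    | zero => simp
    | add a b ha hb => rw [smul_add, ha, hb, map_add, TensorProduct.add_tmul]
    | tmul m b =>
      have : μ (m ⊗ₜ b) = (b : B) • m := by simp [μ]
      rw [this, TensorProduct.smul_tmul, ← TensorProduct.tmul_smul]
      congr 1
      exact Subtype.ext (mul_comm _ _)
  rw [← hπz, hpq, map_add, hπd, add_zero, map_sum]
  have hrel : ∑ k, x k • μ (π (p k)) = 0 := by
    have : μ (π z) = 0 := by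
      rw [hπz]; simp [μ, ht]
    rw [hpq, map_add, hπd, add_zero, map_sum, map_sum] at this
    simpa only [map_smul, algebraMap_smul, LinearMap.map_smul_of_tower] using this
  -- By `A`-flatness the relation `∑ x_k μ(π(p_k)) = 0` is trivial, hence `∑ μ(π(p_k)) ⊗ x_k = 0`.
  obtain ⟨m, a, v, hav, hxa⟩ := Module.Flat.isTrivialRelation_of_sum_smul_eq_zero hrel
  simp only [map_smul, hμ, hav, TensorProduct.sum_tmul]
  rw [Finset.sum_comm]
  refine Finset.sum_eq_zero fun j _ => ?_
  have h : ∀ k, (a k j • v j) ⊗ₜ[B] ξ k = v j ⊗ₜ[B] (algebraMap A B (a k j) • ξ k) := fun k => by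
    rw [← algebraMap_smul B, TensorProduct.smul_tmul]
  simp only [h, ← TensorProduct.tmul_sum]
  have : ∑ k, algebraMap A B (a k j) • ξ k = 0 := Subtype.ext <| by
    simpa [ξ, Algebra.smul_def, mul_comm] using congrArg (algebraMap A B) (hxa j)
  rw [this, TensorProduct.tmul_zero]
end

open IsLocalRing in
/-- Over an Artinian local ring, `Tor₁(B/𝔪_B, M) = 0` implies flatness of `M`, without finiteness
assumptions on `M`. Here `Tor₁` is computed from a presentation `0 → L → P → M → 0` with `P` flat. -/
theorem flat_of_flat_presentation {B : Type u} {M L P : Type*} [CommRing B] [IsLocalRing B]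
    [IsArtinianRing B] [AddCommGroup M] [Module B M] [AddCommGroup L] [Module B L]
    [AddCommGroup P] [Module B P] [Module.Flat B P] (r : L →ₗ[B] P) (f : P →ₗ[B] M)
    (hr : Function.Injective r) (hexact : Function.Exact r f) (hf : Function.Surjective f)
    (H : Function.Injective ((maximalIdeal B).subtype.rTensor M)) :
    Module.Flat B M := by
  -- Injectivity of `N ⊗ L → N ⊗ P` says `Tor₁(N, M) = 0`. The only prime of `B` is `𝔪_B`, so a
  -- prime filtration of `N` reduces this to the residue field.
  have key : ∀ (N : Type u) [AddCommGroup N] [Module B N] [Module.Finite B N],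
      Function.Injective (r.lTensor N) := by
    intro N _ _ hN
    induction hN using IsNoetherianRing.induction_on_isQuotientEquivQuotientPrime (A := B) with
    | subsingleton N => exact Function.injective_of_subsingleton _
    | quotient N p e =>
      have hp : p.asIdeal = maximalIdeal B := eq_maximalIdeal inferInstance
      have h : Function.Injective (r.lTensor (B ⧸ p.asIdeal)) := by
        rw [hp]
        exact lTensor_injective_of_exact_of_exact_of_rTensor_injective
          (LinearMap.exact_subtype_mkQ (maximalIdeal B)) (Submodule.mkQ_surjective _) hexact hf H
          (Module.Flat.lTensor_preserves_injective_linearMap r hr)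
      have hcomm : (e.toLinearMap.rTensor P) ∘ₗ (r.lTensor N) =
          (r.lTensor (B ⧸ p.asIdeal)) ∘ₗ (e.toLinearMap.rTensor L) := by
        rw [LinearMap.rTensor_comp_lTensor, LinearMap.lTensor_comp_rTensor]
      have h2 := h.comp (e.rTensor L).injective
      refine Function.Injective.of_comp (f := e.toLinearMap.rTensor P) ?_
      rw [← LinearMap.coe_comp, hcomm]
      exact h2
    | exact N₁ N₂ N₃ i g hi hg hig h₁ h₃ =>
      rw [injective_iff_map_eq_zero]
      intro t ht
      have h0 : g.rTensor L t = 0 := by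
        apply h₃
        rw [map_zero, ← LinearMap.comp_apply, LinearMap.lTensor_comp_rTensor,
          ← LinearMap.rTensor_comp_lTensor, LinearMap.comp_apply, ht, map_zero]
      obtain ⟨s, rfl⟩ := (rTensor_exact L hig hg t).mp h0
      have hs : r.lTensor N₁ s = 0 := by
        apply Module.Flat.rTensor_preserves_injective_linearMap (M := P) i hi
        rw [map_zero, ← ht, ← LinearMap.comp_apply, ← LinearMap.comp_apply,
          LinearMap.lTensor_comp_rTensor, LinearMap.rTensor_comp_lTensor]
      rw [(injective_iff_map_eq_zero _).mp h₁ s hs, map_zero]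
  rw [Module.Flat.iff_lTensor_injective']
  intro I
  refine lTensor_injective_of_exact_of_exact_of_rTensor_injective hexact hf
    (LinearMap.exact_subtype_mkQ I) (Submodule.mkQ_surjective _) ?_
    (Module.Flat.lTensor_preserves_injective_linearMap (Submodule.subtype I)
      Subtype.val_injective)
  rw [← LinearMap.lTensor_inj_iff_rTensor_inj]
  exact key _

theorem flat_of_isArtinianRing {B M : Type*} [CommRing B] [IsLocalRing B] [IsArtinianRing B]
    [AddCommGroup M] [Module B M]
    (H : Function.Injective ((IsLocalRing.maximalIdeal B).subtype.rTensor M)) :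
    Module.Flat B M := by
  let f : (M →₀ B) →ₗ[B] M := Finsupp.linearCombination B id
  refine flat_of_flat_presentation (L := LinearMap.ker f) (P := M →₀ B)
    (LinearMap.ker f).subtype f ?_ ?_ (Finsupp.linearCombination_id_surjective B M) H
  · exact Subtype.val_injective
  · exact LinearMap.exact_subtype_ker_map f

/-- Zeros pad a minimal generating set to a family of any prescribed length `n ≥ edim R`. -/
theorem exists_generators (R : Type*) [CommRing R] [IsLocalRing R] [IsNoetherianRing R] (n : ℕ)
    (hn : edim R ≤ n) :
    ∃ x : Fin n → R, Ideal.span (Set.range x) = IsLocalRing.maximalIdeal R := by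
  have hne : {n : ℕ | ∃ s : Finset R, s.card = n ∧
      Ideal.span (s : Set R) = IsLocalRing.maximalIdeal R}.Nonempty := by
    obtain ⟨s, hs⟩ := (IsLocalRing.maximalIdeal R).fg_of_isNoetherianRing
    exact ⟨_, s, rfl, hs⟩
  obtain ⟨s, hs, hspan⟩ := Nat.sInf_mem hne
  have hsn : s.card ≤ n := hs.trans_le hn
  refine ⟨fun k => if h : k.1 < s.card then (s.equivFin.symm ⟨k.1, h⟩ : R) else 0, ?_⟩
  apply le_antisymm
  · rw [Ideal.span_le]
    rintro _ ⟨k, rfl⟩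
    dsimp only
    split_ifs
    · rw [← hspan]
      exact Ideal.subset_span (Subtype.prop _)
    · exact zero_mem _
  · rw [← hspan, Ideal.span_le]
    intro a ha
    refine Ideal.subset_span ⟨⟨(s.equivFin ⟨a, ha⟩).1, (Fin.is_lt _).trans_le hsn⟩, ?_⟩
    simp

/-- A relation among minimal generators has no unit coefficient, since otherwise one generator could
be dropped. -/
theorem relation_coeff_mem_maximalIdeal (R : Type*) [CommRing R] [IsLocalRing R]
    (x : Fin (edim R) → R) (hx : Ideal.span (Set.range x) = IsLocalRing.maximalIdeal R)
    (a : Fin (edim R) → R) (ha : ∑ k, x k * a k = 0) (k : Fin (edim R)) :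
    a k ∈ IsLocalRing.maximalIdeal R := by
  classical
  by_contra hk
  have hu : IsUnit (a k) := by simpa using hk
  let s : Finset R := (Finset.univ.erase k).image x
  have hs : Ideal.span (s : Set R) = IsLocalRing.maximalIdeal R := by
    rw [← hx]
    apply le_antisymm
    · refine Ideal.span_mono ?_
      intro r hr
      obtain ⟨j, -, rfl⟩ := Finset.mem_image.mp hr
      exact ⟨j, rfl⟩
    · have hmem : ∀ j, j ≠ k → x j ∈ Ideal.span (s : Set R) := fun j hj =>
        Ideal.subset_span (Finset.mem_image_of_mem x (by simp [hj]))
      rw [Ideal.span_le]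
      rintro _ ⟨j, rfl⟩
      by_cases hj : j = k
      · subst hj
        rw [SetLike.mem_coe, ← Ideal.mul_unit_mem_iff_mem _ hu]
        rw [← Finset.add_sum_erase _ _ (Finset.mem_univ j)] at ha
        rw [eq_neg_of_add_eq_zero_left ha]
        exact neg_mem (sum_mem fun i hi =>
          Ideal.mul_mem_right _ _ (hmem i (Finset.ne_of_mem_erase hi)))
      · exact hmem j hj
  have h1 : edim R ≤ s.card := Nat.sInf_le ⟨s, rfl, hs⟩
  have h2 : s.card ≤ edim R - 1 := by
    simpa [s] using Finset.card_image_le (s := Finset.univ.erase k) (f := x)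
  have := k.2
  omega

theorem stmt_0 (A B : Type*) [CommRing A] [CommRing B]
    [IsLocalRing A] [IsLocalRing B] [IsNoetherianRing A] [IsNoetherianRing B]
    [Algebra A B] (hloc : IsLocalHom (algebraMap A B))
    (hedim : edim B ≤ edim A)
    (M : Type*) [AddCommGroup M] [Module B M] [Module A M] [IsScalarTower A B M]
    (hM : Nontrivial M) (hflat : Module.Flat A M)
    (hcase : (IsArtinianRing A ∧ IsArtinianRing B) ∨ Module.Finite B M) :
    Module.Flat B M := by
  obtain ⟨x, hx⟩ := exists_generators A (edim A) le_rfl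
  obtain ⟨y, hy⟩ := exists_generators B (edim A) hedim
  have H : Function.Injective ((IsLocalRing.maximalIdeal B).subtype.rTensor M) := by
    refine maximalIdeal_rTensor_injective (edim A) x hx
      (relation_coeff_mem_maximalIdeal A x hx) y hy fun k => ?_
    have hk : x k ∈ IsLocalRing.maximalIdeal A := hx ▸ Ideal.subset_span ⟨k, rfl⟩
    have hle : IsLocalRing.maximalIdeal A ≤ (IsLocalRing.maximalIdeal B).comap (algebraMap A B) :=
      ((IsLocalRing.local_hom_TFAE (algebraMap A B)).out 0 3).mp hloc
    exact hle hk
  rcases hcase with ⟨-, _⟩ | _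
  · exact flat_of_isArtinianRing H
  · have : Module.FinitePresentation B M := Module.finitePresentation_of_finite B M
    have := Module.free_of_maximalIdeal_rTensor_injective H
    infer_instance
end

section
/- Let φ : A → B be a local homomorphism of Noetherian local (commutative) rings. Assume that edim(B) ≤ edim(A), that there exists a nonzero B-module M which is flat as an A-module (via φ), and that either both A and B are Artinian or M is finitely generated as a B-module. Then the ring homomorphism φ : A → B is flat (i.e. B is a flat A-module) and edim(B) = edim(A). -/
/-! ### Koszul complexes -/

open TensorProduct in
/-- The differential of the Koszul complex `Λ(Rᵐ) ⊗ M` attached to a functional `φ` on `Rᵐ`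
(the functional sending the `j`-th basis vector to `yⱼ` gives the Koszul complex of `y`). The
complex is treated as a single ungraded module. -/
noncomputable def koszulD {R : Type*} [CommRing R] {m : ℕ} (φ : Module.Dual R (Fin m → R))
    (M : Type*) [AddCommGroup M] [Module R M] :
    (ExteriorAlgebra R (Fin m → R) ⊗[R] M) →ₗ[R] (ExteriorAlgebra R (Fin m → R) ⊗[R] M) :=
  LinearMap.rTensor M (CliffordAlgebra.contractLeft φ)

open TensorProduct in
/-- Left exterior multiplication by `l ∈ Λ(Rᵐ)` on `Λ(Rᵐ) ⊗ M`. -/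
noncomputable def koszulMul {R : Type*} [CommRing R] {m : ℕ} (l : ExteriorAlgebra R (Fin m → R))
    (M : Type*) [AddCommGroup M] [Module R M] :
    (ExteriorAlgebra R (Fin m → R) ⊗[R] M) →ₗ[R] (ExteriorAlgebra R (Fin m → R) ⊗[R] M) :=
  LinearMap.rTensor M (LinearMap.mulLeft R l)

open TensorProduct in
/-- Projection of `Λ(Rᵐ) ⊗ M` onto its degree zero part `M`. -/
noncomputable def koszulP (R : Type*) [CommRing R] (m : ℕ)
    (M : Type*) [AddCommGroup M] [Module R M] :
    (ExteriorAlgebra R (Fin m → R) ⊗[R] M) →ₗ[R] M :=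
  (TensorProduct.lid R M).toLinearMap ∘ₗ
    LinearMap.rTensor M (ExteriorAlgebra.algebraMapInv (R := R) (M := Fin m → R)).toLinearMap

section Koszul

open TensorProduct

variable {R : Type*} [CommRing R] {m : ℕ} (φ : Module.Dual R (Fin m → R))
  {M M' : Type*} [AddCommGroup M] [Module R M] [AddCommGroup M'] [Module R M']

lemma koszulD_koszulD (t : ExteriorAlgebra R (Fin m → R) ⊗[R] M) :
    koszulD φ M (koszulD φ M t) = 0 := by
  induction t with
  | zero => simp
  | add a b ha hb => simp [ha, hb]
  | tmul a b => simp [koszulD, CliffordAlgebra.contractLeft_contractLeft]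

lemma koszulD_mul_ι (v : Fin m → R) (t : ExteriorAlgebra R (Fin m → R) ⊗[R] M) :
    koszulD φ M (koszulMul (ExteriorAlgebra.ι R v) M t) =
      φ v • t - koszulMul (ExteriorAlgebra.ι R v) M (koszulD φ M t) := by
  induction t with
  | zero => simp
  | add a b ha hb => simp only [map_add, ha, hb, smul_add]; abel
  | tmul a b =>
    simp only [koszulD, koszulMul, LinearMap.rTensor_tmul, LinearMap.mulLeft_apply]
    erw [CliffordAlgebra.contractLeft_ι_mul]
    rw [TensorProduct.sub_tmul, TensorProduct.smul_tmul']

lemma koszulD_lTensor (f : M →ₗ[R] M') (t : ExteriorAlgebra R (Fin m → R) ⊗[R] M) :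
    koszulD φ M' (LinearMap.lTensor _ f t) = LinearMap.lTensor _ f (koszulD φ M t) := by
  induction t with
  | zero => simp
  | add a b ha hb => simp [ha, hb]
  | tmul a b => simp [koszulD]

lemma algebraMapInv_contractLeft_mem (J : Ideal R) (hJ : ∀ v, φ v ∈ J)
    (l : ExteriorAlgebra R (Fin m → R)) :
    ExteriorAlgebra.algebraMapInv (CliffordAlgebra.contractLeft φ l) ∈ J := by
  induction l using CliffordAlgebra.left_induction with
  | algebraMap r => rw [CliffordAlgebra.contractLeft_algebraMap]; simp
  | add a b ha hb => rw [map_add, map_add]; exact J.add_mem ha hb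
  | ι_mul x v _ =>
    rw [CliffordAlgebra.contractLeft_ι_mul, map_sub, map_smul, map_mul]
    have : ExteriorAlgebra.algebraMapInv (CliffordAlgebra.ι (0 : QuadraticForm R (Fin m → R)) v)
        = 0 := by
      change ExteriorAlgebra.algebraMapInv (ExteriorAlgebra.ι R v) = 0
      simp [ExteriorAlgebra.algebraMapInv]
    rw [this, zero_mul, sub_zero, smul_eq_mul]
    exact J.mul_mem_right _ (hJ v)

/-- The degree zero part of a Koszul boundary with coefficients in `N = range f` lies in `J N`, where `J`
is any ideal containing the values of `φ`. -/
lemma koszulP_D_mem (J : Ideal R) (hJ : ∀ v, φ v ∈ J) (f : M' →ₗ[R] M)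
    (t : ExteriorAlgebra R (Fin m → R) ⊗[R] M') :
    koszulP R m M (koszulD φ M (LinearMap.lTensor _ f t)) ∈ J • LinearMap.range f := by
  induction t with
  | zero => simp
  | add a b ha hb => simp only [map_add]; exact Submodule.add_mem _ ha hb
  | tmul a b =>
    simp only [koszulP, koszulD, LinearMap.lTensor_tmul, LinearMap.rTensor_tmul,
      LinearMap.comp_apply, LinearEquiv.coe_coe, TensorProduct.lid_tmul]
    exact Submodule.smul_mem_smul (algebraMapInv_contractLeft_mem φ J hJ a) ⟨b, rfl⟩

lemma ι_list_prod_eq_zero (l : List (Fin m → R)) (hl : m < l.length) :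
    (l.map (ExteriorAlgebra.ι R)).prod = 0 := by
  have h0 : ExteriorAlgebra.ιMulti R l.length (M := Fin m → R) = 0 := by
    refine Module.Basis.ext_alternating (Pi.basisFun R (Fin m)) fun v hv => ?_
    have := Fintype.card_le_of_injective v hv
    simp at this
    omega
  have h1 := congrArg (fun g => g l.get) h0
  simp only [ExteriorAlgebra.ιMulti_apply, AlternatingMap.zero_apply] at h1
  rw [← h1]
  congr 1
  conv_lhs => rw [← List.ofFn_get l]
  rw [List.map_ofFn]
  rfl

end Koszul

/-! ### Cycles killed by the homotopies -/

lemma exists_sum_smul_of_mem {R K : Type*} [CommRing R] [AddCommGroup K] [Module R K] {n : ℕ}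
    (x : Fin n → R) (w : K) (hw : w ∈ Ideal.span (Set.range x) • (⊤ : Submodule R K)) :
    ∃ U : Fin n → K, w = ∑ i, x i • U i := by
  refine Submodule.smul_induction_on hw ?_ ?_
  · intro r hr k _
    obtain ⟨a, rfl⟩ := (Submodule.mem_span_range_iff_exists_fun R).1 hr
    exact ⟨fun i => a i • k, by simp [Finset.sum_smul, smul_smul, mul_comm]⟩
  · rintro a b ⟨U, rfl⟩ ⟨V, rfl⟩
    exact ⟨U + V, by simp [Finset.sum_add_distrib]⟩

/-- Let `d` be a differential on `K` and `cᵢ` homotopies with `d cᵢ + cᵢ d = xᵢ`, where the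
`xᵢ` generate `I` and are independent on `K` in the sense that `∑ xᵢ vᵢ = 0` forces all
`vᵢ ∈ I K`. If `t` is a cycle and `c_{n-1} ⋯ c₀ t = 0`, then `t` is a boundary modulo `I K`.
In terms of the homology of `K / I K`, the `cᵢ` together with the Bockstein operators (taking `t`
to the coefficients of `d t` on the `xᵢ`) satisfy the Clifford relations. -/
lemma mem_range_sup_of_iterate_eq_zero {R K : Type*} [CommRing R] [AddCommGroup K] [Module R K]
    {n : ℕ} (d : K →ₗ[R] K) (hd : ∀ t, d (d t) = 0) (x : Fin n → R) (c : Fin n → K →ₗ[R] K)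
    (hc : ∀ i t, d (c i t) = x i • t - c i (d t)) (I : Ideal R)
    (hI : I = Ideal.span (Set.range x))
    (hind : ∀ v : Fin n → K, ∑ i, x i • v i = 0 → ∀ i, v i ∈ I • (⊤ : Submodule R K))
    (ω : ℕ → K) (hω : ∀ i : Fin n, ω (i + 1) = c i (ω i)) (h0 : d (ω 0) = 0) (hn : ω n = 0) :
    ω 0 ∈ LinearMap.range d ⊔ I • (⊤ : Submodule R K) := by
  set E := LinearMap.range d ⊔ I • (⊤ : Submodule R K) with hE
  have hxI : ∀ i, x i ∈ I := fun i => hI ▸ Ideal.subset_span ⟨i, rfl⟩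
  have hcE : ∀ i, ∀ t ∈ E, c i t ∈ E := by
    intro i t ht
    obtain ⟨_, ⟨w, rfl⟩, r, hr, rfl⟩ := Submodule.mem_sup.1 ht
    rw [map_add]
    refine E.add_mem ?_ ?_
    · have : c i (d w) = x i • w - d (c i w) := by rw [hc]; abel
      rw [this]
      exact E.sub_mem (Submodule.mem_sup_right (Submodule.smul_mem_smul (hxI i) trivial))
        (Submodule.mem_sup_left ⟨_, rfl⟩)
    · have h1 : c i r ∈ (I • (⊤ : Submodule R K)).map (c i) := ⟨r, hr, rfl⟩
      rw [Submodule.map_smul''] at h1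
      exact Submodule.mem_sup_right (Submodule.smul_mono le_rfl le_top h1)
  have hsum : ∀ w ∈ I • (⊤ : Submodule R K), ∃ U : Fin n → K, w = ∑ i, x i • U i :=
    fun w hw => exists_sum_smul_of_mem x w (hI ▸ hw)
  -- The Bockstein coefficients of `ω q` at indices `≥ q` vanish in the homology of `K / I K`.
  have hstate : ∀ q ≤ n, ∃ G : Fin n → K, d (ω q) = ∑ i, x i • G i ∧
      ∀ i : Fin n, q ≤ i → G i ∈ E := by
    intro q
    induction q with
    | zero => exact fun _ => ⟨0, by simp [h0], fun i _ => E.zero_mem⟩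
    | succ q ih =>
      intro hq
      obtain ⟨G, hG, hGE⟩ := ih (by omega)
      refine ⟨fun i => (if i = ⟨q, hq⟩ then ω q else 0) - c ⟨q, hq⟩ (G i), ?_, ?_⟩
      · have := hω ⟨q, hq⟩
        simp only at this
        rw [this, hc, hG]
        simp [smul_sub, Finset.sum_sub_distrib]
      · intro i hi
        have : i ≠ ⟨q, hq⟩ := by rintro rfl; simp at hi
        simp only [this, if_false, zero_sub]
        exact E.neg_mem (hcE _ _ (hGE i (by omega)))
  have hdown : ∀ q : Fin n, ω (q + 1) ∈ E → ω q ∈ E := by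
    intro q hq
    obtain ⟨G, hG, hGE⟩ := hstate q q.2.le
    obtain ⟨_, ⟨w, rfl⟩, r, hr, hwr⟩ := Submodule.mem_sup.1 hq
    obtain ⟨U, rfl⟩ := hsum r hr
    have key := hind (fun i => ((if i = q then ω q else 0) - c q (G i)) - d (U i)) (by
      have e1 : d (ω (q + 1)) = ∑ i, x i • d (U i) := by
        rw [← hwr, map_add, hd, map_sum]; simp
      have e2 : d (ω (q + 1)) = ∑ i, x i • ((if i = q then ω q else 0) - c q (G i)) := by
        rw [hω, hc, hG]
        simp [smul_sub, Finset.sum_sub_distrib]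
      simp only [smul_sub (x _) (_ - _) (d _), Finset.sum_sub_distrib]
      rw [← e1, ← e2, sub_self]) q
    simp only [if_true] at key
    have : ω q = (ω q - c q (G q) - d (U q)) + c q (G q) + d (U q) := by abel
    rw [this]
    exact E.add_mem (E.add_mem (Submodule.mem_sup_right key) (hcE _ _ (hGE q le_rfl)))
      (Submodule.mem_sup_left ⟨_, rfl⟩)
  have hall : ∀ q ≤ n, ω q ∈ E → ω 0 ∈ E := by
    intro q
    induction q with
    | zero => exact fun _ h => h
    | succ q ih => exact fun hq h => ih (by omega) (hdown ⟨q, hq⟩ h)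
  exact hall n le_rfl (hn ▸ E.zero_mem)

section Koszul

open TensorProduct

lemma independent_tensor {R L M : Type*} [CommRing R] [AddCommGroup L] [Module R L]
    [Module.Free R L] [AddCommGroup M] [Module R M] {n : ℕ} (x : Fin n → R) (I : Ideal R)
    (hind : ∀ v : Fin n → M, ∑ i, x i • v i = 0 → ∀ i, v i ∈ I • (⊤ : Submodule R M))
    (v : Fin n → L ⊗[R] M) (hv : ∑ i, x i • v i = 0) (i : Fin n) :
    v i ∈ I • (⊤ : Submodule R (L ⊗[R] M)) := by
  let e := TensorProduct.equivFinsuppOfBasisLeft (N := M) (Module.Free.chooseBasis R L)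
  have h1 : ∀ b, e (v i) b ∈ I • (⊤ : Submodule R M) := by
    intro b
    refine hind (fun i => e (v i) b) ?_ i
    have := congrArg (fun w => e w b) hv
    simpa [Finsupp.finsetSum_apply] using this
  have h2 : e (v i) ∈ I • (⊤ : Submodule R (_ →₀ M)) := by
    rw [← Finsupp.sum_single (e (v i))]
    refine Submodule.sum_mem _ fun b _ => ?_
    have : Finsupp.lsingle (R := R) b (e (v i) b) ∈
        (I • (⊤ : Submodule R M)).map (Finsupp.lsingle (R := R) b) := ⟨_, h1 b, rfl⟩
    rw [Submodule.map_smul''] at this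
    exact Submodule.smul_mono le_rfl le_top this
  have h3 : e.symm (e (v i)) ∈ (I • (⊤ : Submodule R (_ →₀ M))).map e.symm.toLinearMap :=
    ⟨_, h2, rfl⟩
  rw [Submodule.map_smul'', e.symm_apply_apply] at h3
  exact Submodule.smul_mono le_rfl le_top h3

/-- The list `[v_{q-1}, …, v₀]`. -/
def revPrefix {α : Type*} {n : ℕ} (v : Fin n → α) : ℕ → List α
  | 0 => []
  | q + 1 => if h : q < n then v ⟨q, h⟩ :: revPrefix v q else revPrefix v q

lemma revPrefix_length {α : Type*} {n : ℕ} (v : Fin n → α) (q : ℕ) (hq : q ≤ n) :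
    (revPrefix v q).length = q := by
  induction q with
  | zero => rfl
  | succ q ih => simp [revPrefix, show q < n by omega, ih (by omega)]

/-- A Koszul cycle `t` on `y` which is annihilated by the product of the `n` degree one elements
lifting the `xᵢ = φ vᵢ` is a boundary modulo `I M`. -/
lemma koszul_cycle_mem {R : Type*} [CommRing R] {m n : ℕ} (φ : Module.Dual R (Fin m → R))
    {M : Type*} [AddCommGroup M] [Module R M] (v : Fin n → Fin m → R) (I : Ideal R)
    (hI : I = Ideal.span (Set.range fun i => φ (v i)))
    (hind : ∀ w : Fin n → M, ∑ i, φ (v i) • w i = 0 → ∀ i, w i ∈ I • (⊤ : Submodule R M))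
    (t : ExteriorAlgebra R (Fin m → R) ⊗[R] M) (ht : koszulD φ M t = 0)
    (hvt : koszulMul ((revPrefix v n).map (ExteriorAlgebra.ι R)).prod M t = 0) :
    t ∈ LinearMap.range (koszulD φ M) ⊔ I • ⊤ := by
  have : Module.Free R (ExteriorAlgebra R (Fin m → R)) :=
    Module.Free.of_basis (Module.Basis.ExteriorAlgebra (Pi.basisFun R (Fin m)))
  have h1 : koszulMul ((revPrefix v 0).map (ExteriorAlgebra.ι R)).prod M t = t := by
    simp [revPrefix, koszulMul]
  have := mem_range_sup_of_iterate_eq_zero (koszulD φ M) (koszulD_koszulD φ)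
    (fun i => φ (v i)) (fun i => koszulMul (ExteriorAlgebra.ι R (v i)) M)
    (fun i t => koszulD_mul_ι φ (v i) t) I hI
    (independent_tensor _ I hind)
    (fun q => koszulMul ((revPrefix v q).map (ExteriorAlgebra.ι R)).prod M t)
    (by
      intro i
      simp only [revPrefix, i.2, dif_pos, List.map_cons, List.prod_cons, koszulMul]
      rw [LinearMap.mulLeft_mul, LinearMap.rTensor_comp]
      rfl)
    (by rw [h1, ht]) hvt
  rwa [h1] at this

lemma exists_lTensor_ker {R L F M : Type*} [CommRing R] [Ring L] [Algebra R L] [AddCommGroup F]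
    [Module R F] [AddCommGroup M] [Module R M] (π : F →ₗ[R] M) (hπ : Function.Surjective π)
    (t : L ⊗[R] F) (ht : LinearMap.lTensor L π t = 0) :
    ∃ s, LinearMap.lTensor L (LinearMap.ker π).subtype s = t :=
  (lTensor_exact L (LinearMap.exact_subtype_ker_map π) hπ t).1 ht

/-- If there are fewer `y`s than `x`s, every degree zero element is a boundary modulo `I M`. -/
lemma top_le_smul_top_of_lt {R : Type*} [CommRing R] {m n : ℕ} (hmn : m < n)
    (φ : Module.Dual R (Fin m → R))
    {M : Type*} [AddCommGroup M] [Module R M] (v : Fin n → Fin m → R) (I J : Ideal R)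
    (hI : I = Ideal.span (Set.range fun i => φ (v i))) (hIJ : I ≤ J) (hφ : ∀ v, φ v ∈ J)
    (hind : ∀ w : Fin n → M, ∑ i, φ (v i) • w i = 0 → ∀ i, w i ∈ I • (⊤ : Submodule R M)) :
    (⊤ : Submodule R M) ≤ J • ⊤ := by
  have hzero := ι_list_prod_eq_zero (revPrefix v n) (by rwa [revPrefix_length _ _ le_rfl])
  intro z _
  have h1 := koszul_cycle_mem φ v I hI hind ((1 : ExteriorAlgebra R (Fin m → R)) ⊗ₜ z)
    (by
      rw [koszulD, LinearMap.rTensor_tmul]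
      erw [CliffordAlgebra.contractLeft_one]
      exact TensorProduct.zero_tmul _ _)
    (by rw [hzero]; simp [koszulMul])
  obtain ⟨_, ⟨w, rfl⟩, r, hr, hwr⟩ := Submodule.mem_sup.1 h1
  have h2 : koszulP R m M ((1 : ExteriorAlgebra R (Fin m → R)) ⊗ₜ[R] z) = z := by
    simp [koszulP]
  rw [← h2, ← hwr, map_add]
  refine Submodule.add_mem _ ?_ ?_
  · simpa using koszulP_D_mem φ J hφ LinearMap.id w
  · have h3 := Submodule.mem_map_of_mem (f := koszulP R m M) hr
    rw [Submodule.map_smul''] at h3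
    exact Submodule.smul_mono hIJ le_top h3

/-- The kernel of a minimal cover `π : F → M` is contained in `I F + J ker π`. An element
`u = ∑ yⱼ gⱼ` of the kernel is the boundary of `∑ eⱼ ⊗ gⱼ`, whose image over `M` is a degree one
cycle, hence a boundary modulo `I M`; lifting this back to `F` and taking boundaries gives the
claim. -/
lemma ker_le_sup {R : Type*} [CommRing R] {m n : ℕ} (hmn : m ≤ n)
    (φ : Module.Dual R (Fin m → R)) {F M : Type*} [AddCommGroup F] [Module R F]
    [AddCommGroup M] [Module R M] (v : Fin n → Fin m → R) (I J : Ideal R)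
    (hI : I = Ideal.span (Set.range fun i => φ (v i))) (hφ : ∀ v, φ v ∈ J)
    (hind : ∀ w : Fin n → M, ∑ i, φ (v i) • w i = 0 → ∀ i, w i ∈ I • (⊤ : Submodule R M))
    (π : F →ₗ[R] M) (hπ : Function.Surjective π)
    (hker : LinearMap.ker π ≤ Ideal.span (Set.range fun j => φ (Pi.single j 1)) • ⊤) :
    LinearMap.ker π ≤ I • ⊤ ⊔ J • LinearMap.ker π := by
  have hzero : ∀ j, ((revPrefix v n).map (ExteriorAlgebra.ι R)).prod *
      ExteriorAlgebra.ι R (Pi.single j 1) = 0 := by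
    intro j
    have := ι_list_prod_eq_zero (revPrefix v n ++ [Pi.single j 1])
      (by rw [List.length_append, revPrefix_length _ _ le_rfl]; simp; omega)
    simpa using this
  intro u hu
  obtain ⟨g, hg⟩ := exists_sum_smul_of_mem _ u (hker hu)
  obtain ⟨t, ht⟩ : ∃ t : ExteriorAlgebra R (Fin m → R) ⊗[R] F,
      t = ∑ j, ExteriorAlgebra.ι R (Pi.single j 1) ⊗ₜ g j := ⟨_, rfl⟩
  have hdt : koszulD φ _ t = (1 : ExteriorAlgebra R (Fin m → R)) ⊗ₜ u := by
    simp only [ht, map_sum, koszulD, LinearMap.rTensor_tmul]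
    rw [hg, TensorProduct.tmul_sum]
    refine Finset.sum_congr rfl fun j _ => ?_
    erw [CliffordAlgebra.contractLeft_ι]
    rw [Algebra.algebraMap_eq_smul_one]
    exact TensorProduct.smul_tmul _ _ _
  have h1 := koszul_cycle_mem φ v I hI hind (LinearMap.lTensor _ π t)
    (by rw [koszulD_lTensor, hdt, LinearMap.lTensor_tmul, LinearMap.mem_ker.1 hu, tmul_zero])
    (by
      simp only [ht, map_sum, LinearMap.lTensor_tmul, koszulMul, LinearMap.rTensor_tmul,
        LinearMap.mulLeft_apply, hzero, TensorProduct.zero_tmul, Finset.sum_const_zero])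
  obtain ⟨_, ⟨w, rfl⟩, r, hr, hwr⟩ := Submodule.mem_sup.1 h1
  obtain ⟨w, rfl⟩ := LinearMap.lTensor_surjective _ hπ w
  obtain ⟨r, hr', rfl⟩ : r ∈ (I • (⊤ : Submodule R _)).map
      (LinearMap.lTensor (ExteriorAlgebra R (Fin m → R)) π) := by
    rwa [Submodule.map_smul'', Submodule.map_top,
      LinearMap.range_eq_top.2 (LinearMap.lTensor_surjective _ hπ)]
  obtain ⟨s, hs⟩ := exists_lTensor_ker π hπ (t - koszulD φ _ w - r) (by
    rw [map_sub, map_sub, ← hwr, koszulD_lTensor]; abel)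
  have h2 : u = koszulP R m _ (koszulD φ _ r) +
      koszulP R m _ (koszulD φ _ (LinearMap.lTensor _ (LinearMap.ker π).subtype s)) := by
    have h3 : koszulP R m _ (koszulD φ _ t) = u := by rw [hdt]; simp [koszulP]
    have h4 : koszulD φ _ (t - koszulD φ _ w - r) = koszulD φ _ t - koszulD φ _ r := by
      rw [map_sub, map_sub, koszulD_koszulD, sub_zero]
    rw [hs, h4, map_sub, h3]
    abel
  rw [h2]
  refine Submodule.add_mem_sup ?_ ?_
  · have h3 := Submodule.mem_map_of_mem (f := koszulP R m F ∘ₗ koszulD φ F) hr'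
    rw [Submodule.map_smul''] at h3
    exact Submodule.smul_mono le_rfl le_top h3
  · have h3 := koszulP_D_mem φ J hφ (LinearMap.ker π).subtype s
    rwa [Submodule.range_subtype] at h3

end Koszul

/-! ### Nakayama, minimal generators and minimal free covers -/

/-- Nakayama's lemma over a local ring, for finitely generated modules or a nilpotent maximal
ideal. -/
lemma nakayama_le {B F : Type*} [CommRing B] [IsLocalRing B] [AddCommGroup F] [Module B F]
    (N N' : Submodule B F) (h : IsArtinianRing B ∨ N.FG)
    (hN : N ≤ N' ⊔ IsLocalRing.maximalIdeal B • N) : N ≤ N' := by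
  rcases h with h | h
  · obtain ⟨k, hk⟩ := IsArtinianRing.isNilpotent_jacobson_bot (R := B)
    rw [IsLocalRing.jacobson_eq_maximalIdeal ⊥ bot_ne_top] at hk
    have : ∀ k, N ≤ N' ⊔ IsLocalRing.maximalIdeal B ^ k • N := by
      intro k
      induction k with
      | zero => simp
      | succ k ih =>
        refine ih.trans (sup_le le_sup_left ?_)
        calc _ ≤ IsLocalRing.maximalIdeal B ^ k • (N' ⊔ IsLocalRing.maximalIdeal B • N) :=
              Submodule.smul_mono le_rfl hN
          _ ≤ _ := by
              rw [Submodule.smul_sup, ← Submodule.mul_smul, ← pow_succ]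
              exact sup_le_sup_right Submodule.smul_le_right _
    simpa [hk] using this k
  · exact Submodule.le_of_le_smul_of_le_jacobson_bot h
      (IsLocalRing.maximalIdeal_le_jacobson ⊥) hN

lemma edim_spec (A : Type*) [CommRing A] [IsLocalRing A] [IsNoetherianRing A] :
    ∃ x : Fin (edim A) → A, Ideal.span (Set.range x) = IsLocalRing.maximalIdeal A := by
  have hne : {n : ℕ | ∃ s : Finset A, s.card = n ∧
      Ideal.span (s : Set A) = IsLocalRing.maximalIdeal A}.Nonempty := by
    obtain ⟨s, hs⟩ := IsNoetherian.noetherian (IsLocalRing.maximalIdeal A)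
    exact ⟨_, s, rfl, hs⟩
  obtain ⟨s, hs, hs'⟩ := Nat.sInf_mem hne
  change s.card = edim A at hs
  refine ⟨fun i => (s.equivFinOfCardEq hs).symm i, ?_⟩
  rw [← hs']
  congr 1
  ext a
  constructor
  · rintro ⟨i, rfl⟩; simp
  · intro ha; exact ⟨s.equivFinOfCardEq hs ⟨a, ha⟩, by simp⟩

lemma edim_minimal (A : Type*) [CommRing A] [IsLocalRing A]
    (x : Fin (edim A) → A) (hx : Ideal.span (Set.range x) = IsLocalRing.maximalIdeal A)
    (a : Fin (edim A) → A) (ha : ∑ i, x i * a i = 0) (i : Fin (edim A)) :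
    a i ∈ IsLocalRing.maximalIdeal A := by
  classical
  by_contra hi
  have hu : IsUnit (a i) := by simpa using hi
  let s : Finset A := (Finset.univ.erase i).image x
  have hxi : x i ∈ Ideal.span (s : Set A) := by
    rw [← Finset.add_sum_erase _ _ (Finset.mem_univ i)] at ha
    have : x i * a i ∈ Ideal.span (s : Set A) := by
      rw [eq_neg_of_add_eq_zero_left ha]
      refine neg_mem (Ideal.sum_mem _ fun j hj => Ideal.mul_mem_right _ _ ?_)
      exact Ideal.subset_span (Finset.mem_coe.2 (Finset.mem_image_of_mem _ hj))
    exact (Ideal.mul_unit_mem_iff_mem _ hu).1 this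
  have hs : Ideal.span (s : Set A) = IsLocalRing.maximalIdeal A := by
    rw [← hx]
    apply le_antisymm
    · refine Ideal.span_mono ?_
      intro b hb
      obtain ⟨j, _, rfl⟩ := Finset.mem_image.1 (Finset.mem_coe.1 hb)
      exact ⟨j, rfl⟩
    · rw [Ideal.span_le]
      rintro _ ⟨j, rfl⟩
      by_cases hj : j = i
      · exact hj ▸ hxi
      · exact Ideal.subset_span (Finset.mem_coe.2 (Finset.mem_image_of_mem _ (by simp [hj])))
  have h1 : edim A ≤ s.card := Nat.sInf_le ⟨s, rfl, hs⟩
  have h2 : s.card ≤ edim A - 1 := Finset.card_image_le.trans (by simp)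
  have := i.2
  omega

/-- A minimal free cover of a module over a local ring: lift a basis of the residue space
`V = M / m_B M` over the residue field `k`. -/
lemma exists_free_cover_aux {B M k V : Type*} [CommRing B] [IsLocalRing B] [IsNoetherianRing B]
    [AddCommGroup M] [Module B M] [Field k] [Algebra B k] [AddCommGroup V] [Module B V]
    [Module k V] [IsScalarTower B k V] (hsurj : Function.Surjective (algebraMap B k))
    (hk : ∀ b, algebraMap B k b = 0 → b ∈ IsLocalRing.maximalIdeal B)
    (p : M →ₗ[B] V) (hp : Function.Surjective p)
    (hker : LinearMap.ker p ≤ IsLocalRing.maximalIdeal B • ⊤)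
    (h : IsArtinianRing B ∨ Module.Finite B M) :
    ∃ (π : (Module.Free.ChooseBasisIndex k V →₀ B) →ₗ[B] M), Function.Surjective π ∧
      LinearMap.ker π ≤ IsLocalRing.maximalIdeal B • ⊤ ∧
      (IsArtinianRing B ∨ (LinearMap.ker π).FG) := by
  let b := Module.Free.chooseBasis k V
  choose g hg using fun i => hp (b i)
  let π := Finsupp.linearCombination B g
  have hmk : ∀ f : (Module.Free.ChooseBasisIndex k V →₀ B), p (π f) =
      Finsupp.linearCombination k b (f.mapRange (algebraMap B k) (map_zero _)) := by
    intro f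
    simp only [π, Finsupp.linearCombination_apply, map_finsuppSum, map_smul, hg]
    rw [Finsupp.sum_mapRange_index (by simp)]
    simp
  have hfin : IsArtinianRing B ∨ Finite (Module.Free.ChooseBasisIndex k V) := by
    refine h.imp id ?_
    intro h
    have : Module.Finite B V := Module.Finite.of_surjective p hp
    have : Module.Finite k V := Module.Finite.of_restrictScalars_finite B k V
    infer_instance
  refine ⟨π, ?_, ?_, ?_⟩
  · rw [← LinearMap.range_eq_top, ← top_le_iff]
    refine nakayama_le _ _ (h.imp id fun h => h.1) ?_
    intro z _
    obtain ⟨f, hf⟩ := Finsupp.mapRange_surjective (α := Module.Free.ChooseBasisIndex k V)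
      (algebraMap B k) (map_zero _) hsurj (b.repr (p z))
    have h1 : p (z - π f) = 0 := by
      rw [map_sub, hmk, hf, b.linearCombination_repr, sub_self]
    have h2 := hker (LinearMap.mem_ker.2 h1)
    rw [← add_sub_cancel (π f) z]
    exact Submodule.add_mem_sup ⟨f, rfl⟩ h2
  · intro f hf
    rw [LinearMap.mem_ker] at hf
    have h0 := hmk f
    rw [hf, map_zero] at h0
    have h1 := b.linearIndependent (h0.symm.trans (map_zero _).symm)
    rw [← Finsupp.sum_single f]
    refine Submodule.sum_mem _ fun i _ => ?_
    have h2 : f i ∈ IsLocalRing.maximalIdeal B := by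
      have := DFunLike.congr_fun h1 i
      exact hk _ (by simpa using this)
    have : Finsupp.single i (f i) = f i • Finsupp.single i (1 : B) := by simp
    rw [this]
    exact Submodule.smul_mem_smul h2 trivial
  · refine hfin.imp id ?_
    intro h
    exact IsNoetherian.noetherian _

universe u w in
lemma exists_free_cover {B : Type u} {M : Type w} [CommRing B] [IsLocalRing B] [IsNoetherianRing B]
    [AddCommGroup M] [Module B M] (h : IsArtinianRing B ∨ Module.Finite B M) :
    ∃ (ι : Type w) (π : (ι →₀ B) →ₗ[B] M), Function.Surjective π ∧
      LinearMap.ker π ≤ IsLocalRing.maximalIdeal B • ⊤ ∧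
      (IsArtinianRing B ∨ (LinearMap.ker π).FG) := by
  let _ : Field (B ⧸ IsLocalRing.maximalIdeal B) := Ideal.Quotient.field _
  exact ⟨_, exists_free_cover_aux (k := B ⧸ IsLocalRing.maximalIdeal B)
    (V := M ⧸ (IsLocalRing.maximalIdeal B • (⊤ : Submodule B M)))
    Ideal.Quotient.mk_surjective (fun b hb => Ideal.Quotient.eq_zero_iff_mem.1 hb)
    (Submodule.mkQ _) (Submodule.mkQ_surjective _) (by rw [Submodule.ker_mkQ]) h⟩

/-! ### The flatness criterion -/

theorem stmt_1 (A B : Type*) [CommRing A] [CommRing B]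
    [IsLocalRing A] [IsLocalRing B] [IsNoetherianRing A] [IsNoetherianRing B]
    [Algebra A B] (hloc : IsLocalHom (algebraMap A B))
    (hedim : edim B ≤ edim A)
    (M : Type*) [AddCommGroup M] [Module B M] [Module A M] [IsScalarTower A B M]
    (hM : Nontrivial M) (hflat : Module.Flat A M)
    (hcase : (IsArtinianRing A ∧ IsArtinianRing B) ∨ Module.Finite B M) :
    Module.Flat A B ∧ edim B = edim A := by
  have hcase' : IsArtinianRing B ∨ Module.Finite B M := hcase.imp And.right id
  obtain ⟨x, hx⟩ := edim_spec A
  obtain ⟨y, hy⟩ := edim_spec B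
  set J := IsLocalRing.maximalIdeal B with hJ
  let I : Ideal B := (IsLocalRing.maximalIdeal A).map (algebraMap A B)
  have hIJ : I ≤ J := ((IsLocalRing.local_hom_TFAE (algebraMap A B)).out 0 2).1 hloc
  have hIx : I = Ideal.span (Set.range fun i => algebraMap A B (x i)) := by
    simp only [I, ← hx, Ideal.map_span, ← Set.range_comp]
    rfl
  -- The functional whose Koszul complex is that of `y`.
  let φ : Module.Dual B (Fin (edim B) → B) := Fintype.linearCombination B y
  have hφ : ∀ v, φ v ∈ J := by
    intro v
    rw [← hy]
    exact (Submodule.mem_span_range_iff_exists_fun B).2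
      ⟨v, (Fintype.linearCombination_apply _ _ _).symm⟩
  have hlift : ∀ i, ∃ v, φ v = algebraMap A B (x i) := by
    intro i
    have h1 : algebraMap A B (x i) ∈ J := hIJ (hIx ▸ Ideal.subset_span ⟨i, rfl⟩)
    rw [← hy] at h1
    obtain ⟨c, hc⟩ := (Submodule.mem_span_range_iff_exists_fun B).1 h1
    exact ⟨c, by rw [← hc]; exact Fintype.linearCombination_apply _ _ _⟩
  choose v hv using hlift
  have hI : I = Ideal.span (Set.range fun i => φ (v i)) := by simpa only [hv] using hIx
  -- Relations with coefficients `xᵢ` are trivial in the `A`-flat module `M`.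
  have htriv : ∀ w : Fin (edim A) → M, ∑ i, φ (v i) • w i = 0 →
      ∃ (l : ℕ) (a : Fin (edim A) → Fin l → A) (z : Fin l → M),
        (∀ i, w i = ∑ j, a i j • z j) ∧ ∀ j, ∑ i, x i * a i j = 0 := by
    intro w hw
    simp only [hv, algebraMap_smul] at hw
    exact Module.Flat.isTrivialRelation_of_sum_smul_eq_zero hw
  have hind : ∀ w : Fin (edim A) → M, ∑ i, φ (v i) • w i = 0 →
      ∀ i, w i ∈ I • (⊤ : Submodule B M) := by
    intro w hw i
    obtain ⟨l, a, z, h1, h2⟩ := htriv w hw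
    rw [h1]
    refine Submodule.sum_mem _ fun j _ => ?_
    rw [← algebraMap_smul B (a i j) (z j)]
    exact Submodule.smul_mem_smul
      (Ideal.mem_map_of_mem _ (edim_minimal A x hx _ (h2 j) i)) trivial
  have hedim_eq : edim B = edim A := by
    by_contra hne
    have hlt : edim B < edim A := lt_of_le_of_ne hedim hne
    have htop : (⊤ : Submodule B M) ≤ ⊥ := by
      refine nakayama_le _ _ (hcase'.imp id fun h => h.1) ?_
      rw [bot_sup_eq]
      exact top_le_smul_top_of_lt hlt φ v I J hI hIJ hφ hind
    exact bot_ne_top (le_bot_iff.1 htop).symm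
  refine ⟨?_, hedim_eq⟩
  obtain ⟨ι, π, hπ, hker, hfg⟩ := exists_free_cover (B := B) (M := M) hcase'
  set N := LinearMap.ker π with hN
  have hφy : (fun j => φ (Pi.single j 1)) = y := by
    ext j
    simp [φ, Fintype.linearCombination_apply_single]
  have hN1 : N ≤ I • ⊤ := nakayama_le _ _ hfg
    (ker_le_sup hedim φ v I J hI hφ hind π hπ (by rw [hφy, hy]; exact hker))
  have hN2 : N ≤ ⊥ := by
    refine nakayama_le _ _ hfg ?_
    rw [bot_sup_eq]
    refine le_trans ?_ (Submodule.smul_mono hIJ le_rfl)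
    intro u hu
    obtain ⟨g, hg⟩ := exists_sum_smul_of_mem _ u (hI ▸ hN1 hu)
    obtain ⟨l, a, z, h1, h2⟩ := htriv (fun i => π (g i)) (by
      have := LinearMap.mem_ker.1 hu
      rw [hg, map_sum] at this
      simpa using this)
    choose z' hz' using fun j => hπ (z j)
    -- Subtracting the lifted trivial relation moves the coefficients of `u` into `N`.
    have h3 : u = ∑ i, φ (v i) • (g i - ∑ j, algebraMap A B (a i j) • z' j) := by
      have h4 : ∑ i, φ (v i) • ∑ j, algebraMap A B (a i j) • z' j = 0 := by
        simp only [Finset.smul_sum, smul_smul, hv, ← map_mul]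
        rw [Finset.sum_comm]
        simp only [← Finset.sum_smul, ← map_sum, h2, map_zero, zero_smul, Finset.sum_const_zero]
      simp only [smul_sub, Finset.sum_sub_distrib]
      rw [h4, sub_zero, hg]
    rw [h3]
    refine Submodule.sum_mem _ fun i _ => Submodule.smul_mem_smul ?_ ?_
    · rw [hI]; exact Ideal.subset_span ⟨i, rfl⟩
    · rw [hN, LinearMap.mem_ker, map_sub, h1 i, map_sum, sub_eq_zero]
      simp [hz']
  let e : (ι →₀ B) ≃ₗ[B] M := LinearEquiv.ofBijective π
    ⟨LinearMap.ker_eq_bot.1 (le_bot_iff.1 hN2), hπ⟩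
  have hι : Nonempty ι := by
    by_contra h
    rw [not_nonempty_iff] at h
    exact not_subsingleton M e.symm.toEquiv.subsingleton
  obtain ⟨i⟩ := hι
  exact Module.Flat.of_retract (M := M)
    ((e.toLinearMap ∘ₗ Finsupp.lsingle i).restrictScalars A)
    ((Finsupp.lapply i ∘ₗ e.symm.toLinearMap).restrictScalars A)
    (by ext; simp)
end

section
/- Let A → B be a local homomorphism of Artinian local (commutative) rings with edim(A) = edim(B). Then every B-module which is flat as an A-module is flat as a B-module. (de Smit's conjecture.) -/
open TensorProduct

namespace DeSmit

/-! ### Generators of the maximal ideal -/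

theorem exists_gens (R : Type*) [CommRing R] [IsLocalRing R] [IsNoetherianRing R] :
    ∃ a : Fin (edim R) → R, Ideal.span (Set.range a) = IsLocalRing.maximalIdeal R ∧
      ∀ α : Fin (edim R) → R, ∑ i, a i * α i = 0 → ∀ k, α k ∈ IsLocalRing.maximalIdeal R := by
  classical
  have hne : {n : ℕ | ∃ s : Finset R, s.card = n ∧
      Ideal.span (s : Set R) = IsLocalRing.maximalIdeal R}.Nonempty := by
    obtain ⟨s, hs⟩ := (isNoetherianRing_iff_ideal_fg R).1 inferInstance
      (IsLocalRing.maximalIdeal R)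
    exact ⟨s.card, s, rfl, hs⟩
  obtain ⟨s, hcard, hspan⟩ := Nat.sInf_mem hne
  have hcard : s.card = edim R := hcard
  let e := s.equivFinOfCardEq hcard
  let a : Fin (edim R) → R := fun i => (e.symm i : R)
  have hrange : Set.range a = (s : Set R) := by
    ext x
    constructor
    · rintro ⟨i, rfl⟩
      exact (e.symm i).2
    · intro hx
      exact ⟨e ⟨x, hx⟩, by simp [a]⟩
  refine ⟨a, by rw [hrange, hspan], ?_⟩
  intro α hα k
  by_contra hk
  have hu : IsUnit (α k) := by
    by_contra h
    exact hk ((IsLocalRing.mem_maximalIdeal _).2 h)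
  obtain ⟨v, hv⟩ := hu.exists_right_inv
  -- a unit coefficient would make the generator `a k` superfluous
  have hmem : a k ∈ Ideal.span ((s.erase (a k) : Finset R) : Set R) := by
    rw [← Finset.add_sum_erase _ _ (Finset.mem_univ k)] at hα
    have h1 : a k = -(v * ∑ i ∈ Finset.univ.erase k, a i * α i) := by
      linear_combination v * hα - a k * hv
    have h2 : ∑ i ∈ Finset.univ.erase k, a i * α i ∈
        Ideal.span ((s.erase (a k) : Finset R) : Set R) := by
      refine sum_mem fun i hi => Ideal.mul_mem_right _ _ (Ideal.subset_span ?_)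
      have hik : i ≠ k := (Finset.mem_erase.1 hi).1
      have : a i ≠ a k := fun h => hik (e.symm.injective (Subtype.ext h))
      exact Finset.mem_coe.2 (Finset.mem_erase.2 ⟨this, (e.symm i).2⟩)
    have h3 := neg_mem (Ideal.mul_mem_left _ v h2)
    rwa [← h1] at h3
  have hks : a k ∈ s := (e.symm k).2
  have hspan' : Ideal.span ((s.erase (a k) : Finset R) : Set R) = IsLocalRing.maximalIdeal R := by
    rw [← hspan]
    apply le_antisymm
    · exact Ideal.span_mono (by simp)
    · refine Ideal.span_le.2 fun x hx => ?_
      by_cases hxk : x = a k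
      · rw [hxk]; exact hmem
      · exact Ideal.subset_span (by simpa [hxk] using hx)
  have hle : edim R ≤ (s.erase (a k)).card := Nat.sInf_le ⟨_, rfl, hspan'⟩
  have := Finset.card_erase_lt_of_mem hks
  omega

theorem exists_sum_of_mem_smul_top {R N : Type*} [CommRing R] [AddCommGroup N] [Module R N]
    {n : ℕ} (b : Fin n → R) {x : N}
    (hx : x ∈ Ideal.span (Set.range b) • (⊤ : Submodule R N)) :
    ∃ g : Fin n → N, x = ∑ j, b j • g j := by
  refine Submodule.smul_induction_on hx ?_ ?_
  · intro r hr m _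
    obtain ⟨c, hc⟩ := Ideal.mem_span_range_iff_exists_fun.1 hr
    refine ⟨fun j => c j • m, ?_⟩
    rw [← hc, Finset.sum_smul]
    exact Finset.sum_congr rfl fun j _ => by rw [smul_smul, mul_comm]
  · rintro x y ⟨g, rfl⟩ ⟨h, rfl⟩
    exact ⟨g + h, by simp [Finset.sum_add_distrib]⟩

/-! ### Cycles killed by the homotopies -/

/-- The list `l` records the homotopies `σ i` still to be applied. The hypothesis on `v` says that
`d w` does not involve the corresponding `a i`, so that independence can be used on the coefficient
of `a i` in `d (σ i w) = a i • w - σ i (d w)`. -/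
theorem exists_of_foldl {R E : Type*} [CommRing R] [AddCommGroup E] [Module R E] {n : ℕ}
    (a : Fin n → R) (d : E →ₗ[R] E) (σ : Fin n → E →ₗ[R] E)
    (hd : ∀ x, d (d x) = 0) (hσ : ∀ i x, d (σ i x) = a i • x - σ i (d x))
    (hind : ∀ w : Fin n → E, ∑ i, a i • w i = 0 → ∀ k, ∃ e : Fin n → E, w k = ∑ i, a i • e i)
    (l : List (Fin n)) (hl : l.Nodup) :
    ∀ (w : E) (v : Fin n → E), d w = ∑ i, a i • v i → (∀ i ∈ l, v i = 0) →
      l.foldl (fun x i => σ i x) w = 0 →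
      ∃ (e : Fin n → E) (f : E), w = ∑ i, a i • e i + d f := by
  classical
  induction l with
  | nil =>
    intro w v _ _ h
    exact ⟨0, 0, by simpa using h⟩
  | cons k l ih =>
    intro w v hw hv h
    have hdσ : d (σ k w) = ∑ i, a i • (if i = k then w else -σ k (v i)) := by
      rw [hσ, hw, map_sum, ← Finset.add_sum_erase _ _ (Finset.mem_univ k),
        ← Finset.add_sum_erase _ (fun i => a i • (if i = k then w else -σ k (v i)))
          (Finset.mem_univ k), hv k (by simp)]
      simp only [smul_zero, map_zero, zero_add, if_true, sub_eq_add_neg, ← Finset.sum_neg_distrib]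
      congr 1
      refine Finset.sum_congr rfl fun i hi => ?_
      rw [if_neg (Finset.mem_erase.1 hi).1, map_smul, smul_neg]
    obtain ⟨e, f, hef⟩ := ih (List.nodup_cons.1 hl).2 (σ k w) _ hdσ
      (by
        intro i hi
        have hik : i ≠ k := fun h => (List.nodup_cons.1 hl).1 (h ▸ hi)
        simp [hik, hv i (List.mem_cons_of_mem _ hi)])
      (by simpa using h)
    have h2 : ∑ i, a i • ((if i = k then w else -σ k (v i)) - d (e i)) = 0 := by
      simp only [smul_sub, Finset.sum_sub_distrib]
      rw [← hdσ, hef]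
      simp [hd]
    obtain ⟨e', he'⟩ := hind _ h2 k
    refine ⟨e', e k, ?_⟩
    rw [← he']
    simp

/-! ### The Koszul complex -/

section Koszul

variable {R : Type*} [CommRing R] {n : ℕ}

theorem prod_ι_eq_zero (L : List (Fin n → R)) (hL : L.length = n + 1) :
    (L.map (ExteriorAlgebra.ι R)).prod = 0 := by
  have h0 : ExteriorAlgebra.ιMulti R (n + 1) (M := Fin n → R) = 0 := by
    refine Module.Basis.ext_alternating (Pi.basisFun R (Fin n)) fun v hv => ?_
    have := Fintype.card_le_of_injective v hv
    simp at this
  have h1 := congrArg (fun f => f (fun i : Fin (n + 1) => L.get (i.cast hL.symm))) h0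
  simp only [ExteriorAlgebra.ιMulti_apply, AlternatingMap.zero_apply] at h1
  rw [← h1]
  congr 1
  apply List.ext_getElem
  · simp [hL]
  · intro i h1 h2
    simp only [List.getElem_map, List.getElem_ofFn, List.get_eq_getElem, Fin.val_cast]

/-- The Koszul differential of the sequence `b` on the exterior algebra of `Rⁿ`. -/
noncomputable def kd (b : Fin n → R) :
    ExteriorAlgebra R (Fin n → R) →ₗ[R] ExteriorAlgebra R (Fin n → R) :=
  CliffordAlgebra.contractLeft (Fintype.linearCombination R b)

theorem kd_kd (b : Fin n → R) (x) : kd b (kd b x) = 0 :=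
  CliffordAlgebra.contractLeft_contractLeft _ _

theorem kd_ι_mul (b : Fin n → R) (v : Fin n → R) (x) :
    kd b (ExteriorAlgebra.ι R v * x) = (∑ j, v j * b j) • x - ExteriorAlgebra.ι R v * kd b x := by
  have := CliffordAlgebra.contractLeft_ι_mul (Q := (0 : QuadraticForm R (Fin n → R)))
    (Fintype.linearCombination R b) v x
  rw [Fintype.linearCombination_apply] at this
  exact this

theorem kd_one (b : Fin n → R) : kd b 1 = 0 :=
  CliffordAlgebra.contractLeft_one _ _

theorem kd_ι (b : Fin n → R) (v : Fin n → R) :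
    kd b (ExteriorAlgebra.ι R v) = algebraMap R _ (∑ j, v j * b j) := by
  have := kd_ι_mul b v 1
  rwa [mul_one, kd_one, mul_zero, sub_zero, ← Algebra.algebraMap_eq_smul_one] at this

/-- The Koszul differential followed by the projection to degree zero, as a linear form on the
whole exterior algebra. -/
noncomputable def kaug (b : Fin n → R) : ExteriorAlgebra R (Fin n → R) →ₗ[R] R :=
  ExteriorAlgebra.algebraMapInv.toLinearMap ∘ₗ kd b

theorem kaug_kd (b : Fin n → R) (x) : kaug b (kd b x) = 0 := by
  simp [kaug, kd_kd]

theorem kaug_ι (b : Fin n → R) (v : Fin n → R) :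
    kaug b (ExteriorAlgebra.ι R v) = ∑ j, v j * b j := by
  rw [kaug, LinearMap.comp_apply, kd_ι]
  exact ExteriorAlgebra.algebraMap_leftInverse _ _

theorem kaug_mem (b : Fin n → R) (x) : kaug b x ∈ Ideal.span (Set.range b) := by
  induction x using CliffordAlgebra.left_induction with
  | algebraMap r =>
    have : kaug b (algebraMap R _ r) = 0 := by
      rw [Algebra.algebraMap_eq_smul_one, map_smul]
      simp [kaug, kd_one]
    exact this ▸ zero_mem _
  | add x y hx hy => rw [map_add]; exact add_mem hx hy
  | ι_mul x v _ =>
    have h0 : ExteriorAlgebra.algebraMapInv (ExteriorAlgebra.ι R v) = 0 := by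
      simp [ExteriorAlgebra.algebraMapInv]
    have : kaug b (ExteriorAlgebra.ι R v * x) =
        (∑ j, v j * b j) * ExteriorAlgebra.algebraMapInv x := by
      rw [kaug, LinearMap.comp_apply, kd_ι_mul]
      simp [h0]
    rw [show CliffordAlgebra.ι (0 : QuadraticForm R (Fin n → R)) v = ExteriorAlgebra.ι R v from rfl,
      this]
    exact Ideal.mul_mem_right _ _ (sum_mem fun j _ => Ideal.mul_mem_left _ _
      (Ideal.subset_span ⟨j, rfl⟩))

variable {N : Type*} [AddCommGroup N] [Module R N]

/-- The linear form `kaug b` with coefficients in `N`. -/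
noncomputable def kaugN (b : Fin n → R) (N : Type*) [AddCommGroup N] [Module R N] :
    ExteriorAlgebra R (Fin n → R) ⊗[R] N →ₗ[R] N :=
  (TensorProduct.lid R N).toLinearMap ∘ₗ (kaug b).rTensor N

theorem kaugN_tmul (b : Fin n → R) (x : ExteriorAlgebra R (Fin n → R)) (y : N) :
    kaugN b N (x ⊗ₜ y) = kaug b x • y := by
  simp [kaugN]

theorem kaugN_kd (b : Fin n → R) (x : ExteriorAlgebra R (Fin n → R) ⊗[R] N) :
    kaugN b N ((kd b).rTensor N x) = 0 := by
  induction x with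
  | zero => simp
  | tmul x y => rw [LinearMap.rTensor_tmul, kaugN_tmul, kaug_kd, zero_smul]
  | add x y hx hy => rw [map_add, map_add, hx, hy, add_zero]

theorem kaugN_mem (b : Fin n → R) (x : ExteriorAlgebra R (Fin n → R) ⊗[R] N) :
    kaugN b N x ∈ Ideal.span (Set.range b) • (⊤ : Submodule R N) := by
  induction x with
  | zero => simp
  | tmul x y =>
    rw [kaugN_tmul]
    exact Submodule.smul_mem_smul (kaug_mem b x) trivial
  | add x y hx hy => rw [map_add]; exact add_mem hx hy

theorem kaugN_lTensor (b : Fin n → R) {N' : Type*} [AddCommGroup N'] [Module R N']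
    (f : N →ₗ[R] N') (x : ExteriorAlgebra R (Fin n → R) ⊗[R] N) :
    kaugN b N' (f.lTensor _ x) = f (kaugN b N x) := by
  induction x with
  | zero => simp
  | tmul x y => rw [LinearMap.lTensor_tmul, kaugN_tmul, kaugN_tmul, map_smul]
  | add x y hx hy => simp only [map_add, hx, hy]

/-- The degree one element `∑ eⱼ ⊗ gⱼ` of the Koszul complex with coefficients in `N`. -/
noncomputable def degOne (g : Fin n → N) : ExteriorAlgebra R (Fin n → R) ⊗[R] N :=
  ∑ j, ExteriorAlgebra.ι R (Pi.single j 1) ⊗ₜ g j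

theorem kaugN_degOne (b : Fin n → R) (g : Fin n → N) :
    kaugN b N (degOne g) = ∑ j, b j • g j := by
  simp [degOne, kaugN_tmul, kaug_ι, Pi.single_apply]

theorem kd_degOne (b : Fin n → R) (g : Fin n → N) :
    (kd b).rTensor N (degOne g) = 1 ⊗ₜ ∑ j, b j • g j := by
  simp [degOne, kd_ι, Pi.single_apply, tmul_sum, Algebra.algebraMap_eq_smul_one, smul_tmul]

theorem foldl_degOne (u : Fin n → Fin n → R) (g : Fin n → N) :
    (List.finRange n).foldl (fun x i =>
      (LinearMap.mulLeft R (ExteriorAlgebra.ι R (u i))).rTensor N x) (degOne g) = 0 := by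
  have key : ∀ (l : List (Fin n)) (z : Fin n → ExteriorAlgebra R (Fin n → R)),
      l.foldl (fun x i => (LinearMap.mulLeft R (ExteriorAlgebra.ι R (u i))).rTensor N x)
        (∑ j, z j ⊗ₜ g j) =
      ∑ j, (((l.reverse.map u).map (ExteriorAlgebra.ι R)).prod * z j) ⊗ₜ g j := by
    intro l
    induction l with
    | nil => intro z; simp
    | cons k l ih =>
      intro z
      have h := ih (fun j => ExteriorAlgebra.ι R (u k) * z j)
      simp only [List.foldl_cons, map_sum, LinearMap.rTensor_tmul, LinearMap.mulLeft_apply]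
      rw [h]
      simp [mul_assoc]
  rw [degOne, key]
  refine Finset.sum_eq_zero fun j _ => ?_
  have := prod_ι_eq_zero (((List.finRange n).reverse.map u) ++ [Pi.single j 1]) (by simp)
  rw [List.map_append, List.prod_append] at this
  simp only [List.map_cons, List.map_nil, List.prod_singleton] at this
  rw [this, zero_tmul]

/-- The exterior algebra of `Rⁿ` is free of finite rank, so its tensor product with `N` inherits
the independence property coordinatewise. -/
theorem ind_tensor (a : Fin n → R)
    (hind : ∀ w : Fin n → N, ∑ i, a i • w i = 0 → ∀ k, ∃ e : Fin n → N, w k = ∑ i, a i • e i)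
    (w : Fin n → ExteriorAlgebra R (Fin n → R) ⊗[R] N) (hw : ∑ i, a i • w i = 0) (k : Fin n) :
    ∃ e : Fin n → ExteriorAlgebra R (Fin n → R) ⊗[R] N, w k = ∑ i, a i • e i := by
  let φ : ExteriorAlgebra R (Fin n → R) ⊗[R] N ≃ₗ[R] (Finset (Fin n) → N) :=
    (TensorProduct.equivFinsuppOfBasisLeft (Pi.basisFun R (Fin n)).ExteriorAlgebra).trans
      (Finsupp.linearEquivFunOnFinite R N _)
  have h1 : ∀ s, ∑ i, a i • φ (w i) s = 0 := by
    intro s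
    have := congrFun (congrArg φ hw) s
    simpa using this
  choose e he using fun s => hind _ (h1 s) k
  refine ⟨fun i => φ.symm fun s => e s i, φ.injective ?_⟩
  ext s
  simp [he s]

/-- If `π : F → M` is surjective and the `a i` are independent on `M` in the sense of `hind`, an
element `∑ bⱼ gⱼ` of the kernel `K` of `π` lies in `(b) K + (a) F`. -/
theorem mem_smul_add (a b : Fin n → R) (u : Fin n → Fin n → R)
    (hu : ∀ i, ∑ j, u i j * b j = a i)
    (hind : ∀ w : Fin n → N, ∑ i, a i • w i = 0 → ∀ k, ∃ e : Fin n → N, w k = ∑ i, a i • e i)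
    {F : Type*} [AddCommGroup F] [Module R F] (π : F →ₗ[R] N) (hπ : Function.Surjective π)
    (g : Fin n → F) (hg : π (∑ j, b j • g j) = 0) :
    ∃ (h : Fin n → F), ∃ κ ∈ Ideal.span (Set.range b) • LinearMap.ker π,
      ∑ j, b j • g j = ∑ i, a i • h i + κ := by
  let σ : Fin n → (ExteriorAlgebra R (Fin n → R) ⊗[R] N) →ₗ[R] _ := fun i =>
    (LinearMap.mulLeft R (ExteriorAlgebra.ι R (u i))).rTensor N
  have hd : ∀ x, (kd b).rTensor N ((kd b).rTensor N x) = 0 := by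
    intro x
    induction x with
    | zero => simp
    | tmul x y => simp [kd_kd]
    | add x y hx hy => simp only [map_add, hx, hy, add_zero]
  have hσ : ∀ i x, (kd b).rTensor N (σ i x) = a i • x - σ i ((kd b).rTensor N x) := by
    intro i x
    induction x with
    | zero => simp
    | tmul x y => simp [σ, kd_ι_mul, hu, sub_tmul, smul_tmul']
    | add x y hx hy => simp only [map_add, hx, hy, smul_add]; abel
  have hcycle : (kd b).rTensor N (degOne fun j => π (g j)) = ∑ i, a i • (0 : Fin n → _) i := by
    rw [kd_degOne]
    have : ∑ j, b j • π (g j) = 0 := by simpa using hg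
    simp [this]
  obtain ⟨e, f, hef⟩ := exists_of_foldl a ((kd b).rTensor N) σ hd hσ (ind_tensor a hind)
    (List.finRange n) (List.nodup_finRange n) _ _ hcycle (by simp) (foldl_degOne u _)
  have hsurj := LinearMap.lTensor_surjective (ExteriorAlgebra R (Fin n → R)) hπ
  choose e' he' using fun i => hsurj (e i)
  obtain ⟨f', hf'⟩ := hsurj f
  have hker : π.lTensor (ExteriorAlgebra R (Fin n → R))
      (degOne g - (∑ i, a i • e' i + (kd b).rTensor F f')) = 0 := by
    have h1 : π.lTensor (ExteriorAlgebra R (Fin n → R)) (degOne g) = degOne fun j => π (g j) := by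
      simp [degOne]
    have h2 : π.lTensor (ExteriorAlgebra R (Fin n → R)) ((kd b).rTensor F f') =
        (kd b).rTensor N f := by
      rw [← hf', ← LinearMap.comp_apply, ← LinearMap.comp_apply, LinearMap.lTensor_comp_rTensor,
        LinearMap.rTensor_comp_lTensor]
    rw [map_sub, map_add, h1, h2, hef]
    simp [he']
  obtain ⟨y, hy⟩ := (lTensor_exact (ExteriorAlgebra R (Fin n → R))
    (LinearMap.exact_subtype_ker_map π) hπ _).1 hker
  refine ⟨fun i => kaugN b F (e' i), (kaugN b _ y : LinearMap.ker π), ?_, ?_⟩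
  · have := Submodule.mem_map_of_mem (f := (LinearMap.ker π).subtype) (kaugN_mem b y)
    rwa [Submodule.map_smul'', Submodule.map_subtype_top] at this
  · have h := congrArg (kaugN b F) hy
    rw [kaugN_lTensor, map_sub, map_add, kaugN_degOne, kaugN_kd] at h
    simp only [Submodule.subtype_apply, map_sum, map_smul, add_zero] at h
    rw [h]
    abel

end Koszul

/-! ### Modules over a local ring with nilpotent maximal ideal -/

theorem eq_bot_of_le_smul {R N : Type*} [CommRing R] [AddCommGroup N] [Module R N]
    {I : Ideal R} (hI : IsNilpotent I) {K : Submodule R N} (hK : K ≤ I • K) : K = ⊥ := by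
  obtain ⟨k, hk⟩ := hI
  have h : ∀ m : ℕ, K ≤ I ^ m • K := by
    intro m
    induction m with
    | zero => simp
    | succ m ih =>
      rw [pow_succ, Submodule.mul_smul]
      exact ih.trans (smul_mono_right _ hK)
  have := h k
  rw [hk] at this
  simpa using this

theorem eq_top_of_sup_smul {R N : Type*} [CommRing R] [AddCommGroup N] [Module R N]
    {I : Ideal R} (hI : IsNilpotent I) {K : Submodule R N}
    (hK : K ⊔ I • (⊤ : Submodule R N) = ⊤) : K = ⊤ := by
  obtain ⟨k, hk⟩ := hI
  have h : ∀ m : ℕ, K ⊔ I ^ m • (⊤ : Submodule R N) = ⊤ := by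
    intro m
    induction m with
    | zero => simp
    | succ m ih =>
      refine eq_top_iff.2 (ih.ge.trans (sup_le le_sup_left ?_))
      have h1 : I ^ m • (⊤ : Submodule R N) = I ^ m • K ⊔ I ^ (m + 1) • ⊤ := by
        rw [pow_succ, Submodule.mul_smul, ← Submodule.smul_sup, hK]
      have h2 : I ^ m • K ≤ K := Submodule.smul_le_right
      calc I ^ m • (⊤ : Submodule R N) = I ^ m • K ⊔ I ^ (m + 1) • ⊤ := h1
        _ ≤ K ⊔ I ^ (m + 1) • ⊤ := sup_le_sup_right h2 _
  have := h k
  rw [hk] at this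
  simpa using this

/-- A module over a local ring with nilpotent maximal ideal `m` is a quotient of a free module by a
submodule of `m F`: lift a basis of the vector space `N / m N`. -/
theorem exists_cover.{v, w} (R : Type v) {N : Type w} [CommRing R] [IsLocalRing R] [AddCommGroup N]
    [Module R N] (hnil : IsNilpotent (IsLocalRing.maximalIdeal R)) :
    ∃ (ι : Type w) (y : ι → N), Function.Surjective (Finsupp.linearCombination R y) ∧
      LinearMap.ker (Finsupp.linearCombination R y) ≤ IsLocalRing.maximalIdeal R • ⊤ := by
  set m := IsLocalRing.maximalIdeal R with hm
  let : Field (R ⧸ m) := Ideal.Quotient.field m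
  let V := N ⧸ (m • (⊤ : Submodule R N))
  let β := Module.Basis.ofVectorSpace (R ⧸ m) V
  choose y hy using fun i => Submodule.mkQ_surjective (m • (⊤ : Submodule R N)) (β i)
  refine ⟨_, y, ?_, ?_⟩
  · rw [← LinearMap.range_eq_top]
    apply eq_top_of_sup_smul hnil
    rw [eq_top_iff]
    intro x _
    obtain ⟨c, hc⟩ : ∃ c : _ →₀ R ⧸ m, Finsupp.linearCombination (R ⧸ m) β c =
        Submodule.mkQ (m • (⊤ : Submodule R N)) x := ⟨_, β.linearCombination_repr _⟩
    obtain ⟨c', rfl⟩ := Finsupp.mapRange_surjective (Ideal.Quotient.mk m) (map_zero _)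
      Ideal.Quotient.mk_surjective c
    have h1 : Submodule.mkQ (m • (⊤ : Submodule R N)) (x - Finsupp.linearCombination R y c') = 0 := by
      rw [map_sub, ← hc, Finsupp.linearCombination_apply, Finsupp.linearCombination_apply,
        Finsupp.sum_mapRange_index (by simp), Finsupp.sum, Finsupp.sum, map_sum, sub_eq_zero]
      refine Finset.sum_congr rfl fun i _ => ?_
      rw [map_smul, hy]
      rfl
    rw [Submodule.mkQ_apply, Submodule.Quotient.mk_eq_zero] at h1
    refine Submodule.mem_sup.2 ⟨_, ⟨c', rfl⟩, _, h1, by abel⟩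
  · intro c hc
    have h1 : Finsupp.linearCombination (R ⧸ m) β
        (c.mapRange (Ideal.Quotient.mk m) (map_zero _)) = 0 := by
      have h0 := congrArg (Submodule.mkQ (m • (⊤ : Submodule R N))) (LinearMap.mem_ker.1 hc)
      rw [map_zero] at h0
      rw [← h0, Finsupp.linearCombination_apply, Finsupp.linearCombination_apply,
        Finsupp.sum_mapRange_index (by simp), Finsupp.sum, Finsupp.sum, map_sum]
      refine Finset.sum_congr rfl fun i _ => ?_
      rw [map_smul, hy]
      rfl
    have h2 := (linearIndependent_iff.1 β.linearIndependent) _ h1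
    rw [← Finsupp.sum_single c]
    refine sum_mem fun i _ => ?_
    have h3 : c i ∈ m := by
      have := DFunLike.congr_fun h2 i
      rw [Finsupp.mapRange_apply] at this
      exact Ideal.Quotient.eq_zero_iff_mem.1 this
    have h4 : (Finsupp.single i (c i) : _ →₀ R) = c i • Finsupp.single i 1 := by simp
    rw [h4]
    exact Submodule.smul_mem_smul h3 trivial

end DeSmit

open DeSmit in
/-- de Smit's conjecture. -/
theorem stmt_3 (A B : Type*) [CommRing A] [CommRing B]
    [IsLocalRing A] [IsLocalRing B] [IsArtinianRing A] [IsArtinianRing B]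
    [Algebra A B] (hloc : IsLocalHom (algebraMap A B))
    (hedim : edim A = edim B)
    (M : Type*) [AddCommGroup M] [Module B M] [Module A M] [IsScalarTower A B M]
    (hflat : Module.Flat A M) :
    Module.Flat B M := by
  obtain ⟨a, ha, hmin⟩ := exists_gens A
  obtain ⟨b, hb⟩ : ∃ b : Fin (edim A) → B,
      Ideal.span (Set.range b) = IsLocalRing.maximalIdeal B := by
    rw [hedim]
    obtain ⟨b, hb, -⟩ := exists_gens B
    exact ⟨b, hb⟩
  have hnil : IsNilpotent (IsLocalRing.maximalIdeal B) := by
    rw [← IsLocalRing.jacobson_eq_maximalIdeal ⊥ bot_ne_top]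
    exact IsArtinianRing.isNilpotent_jacobson_bot
  have hamem : ∀ i, algebraMap A B (a i) ∈ IsLocalRing.maximalIdeal B := fun i =>
    map_nonunit (algebraMap A B) (a i) (ha ▸ Ideal.subset_span ⟨i, rfl⟩)
  have hu : ∀ i, ∃ c : Fin (edim A) → B, ∑ j, c j * b j = algebraMap A B (a i) := fun i =>
    Ideal.mem_span_range_iff_exists_fun.1 (hb ▸ hamem i)
  choose u hu using hu
  -- a relation `∑ aᵢ wᵢ = 0` in `M` comes from relations in `A`, whose coefficients lie in `m_A`
  have hind : ∀ w : Fin (edim A) → M, ∑ i, algebraMap A B (a i) • w i = 0 →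
      ∀ k, ∃ e : Fin (edim A) → M, w k = ∑ i, algebraMap A B (a i) • e i := by
    intro w hw k
    simp only [algebraMap_smul] at hw ⊢
    obtain ⟨l, α, y, h1, h2⟩ := Module.Flat.isTrivialRelation_of_sum_smul_eq_zero hw
    apply exists_sum_of_mem_smul_top
    rw [h1 k, ha]
    exact sum_mem fun j _ => Submodule.smul_mem_smul (hmin _ (h2 j) k) trivial
  obtain ⟨ι, y, hsurj, hker⟩ := exists_cover B (N := M) hnil
  set π := Finsupp.linearCombination B y with hπ
  have hK : LinearMap.ker π = ⊥ := by
    refine eq_bot_of_le_smul hnil fun c hc => ?_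
    have hcm := hker hc
    rw [← hb] at hcm
    obtain ⟨g, rfl⟩ := exists_sum_of_mem_smul_top b hcm
    obtain ⟨h, κ, hκ, hsum⟩ := mem_smul_add _ b u hu hind π hsurj g (LinearMap.mem_ker.1 hc)
    rw [hb] at hκ
    rw [hsum]
    refine add_mem ?_ hκ
    have hrel : ∑ i, a i • π (h i) = 0 := by
      have h0 : π κ = 0 := LinearMap.mem_ker.1 (Submodule.smul_le_right hκ)
      have h1 := LinearMap.mem_ker.1 hc
      rw [hsum, map_add, h0, add_zero, map_sum] at h1
      rw [← h1]
      exact Finset.sum_congr rfl fun i _ => by rw [map_smul, algebraMap_smul]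
    -- flatness over `A` lets the `h i` be corrected to elements of the kernel
    obtain ⟨l, α, z, h1, h2⟩ := Module.Flat.isTrivialRelation_of_sum_smul_eq_zero hrel
    choose z' hz' using fun j => hsurj (z j)
    have h3 : ∑ i, algebraMap A B (a i) • h i =
        ∑ i, algebraMap A B (a i) • (h i - ∑ j, algebraMap A B (α i j) • z' j) := by
      have : ∑ i, algebraMap A B (a i) • ∑ j, algebraMap A B (α i j) • z' j = 0 := by
        simp only [Finset.smul_sum, smul_smul, ← map_mul]
        rw [Finset.sum_comm]
        refine Finset.sum_eq_zero fun j _ => ?_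
        rw [← Finset.sum_smul, ← map_sum, h2 j, map_zero, zero_smul]
      simp only [smul_sub, Finset.sum_sub_distrib, this, sub_zero]
    rw [h3]
    refine sum_mem fun i _ => Submodule.smul_mem_smul (hamem i) ?_
    rw [LinearMap.mem_ker, map_sub, map_sum, sub_eq_zero]
    refine (h1 i).trans ?_
    refine Finset.sum_congr rfl fun j _ => ?_
    rw [map_smul, hz', algebraMap_smul]
  exact Module.Flat.of_linearEquiv
    (LinearEquiv.ofBijective π ⟨LinearMap.ker_eq_bot.1 hK, hsurj⟩).symm
end

section
/- Let B be a commutative ring, M a B-module, and n a positive integer. Let x_1, …, x_n and u_1, …, u_n be elements of B, and let J_x and J_u denote the ideals of B generated by x_1, …, x_n and by u_1, …, u_n respectively. Assume: (1) there is an n × n matrix W = (c_{ij}) with entries in B such that x_i = Σ_j c_{ij} u_j for all i; set Δ = det W; (2) for all m_1, …, m_n ∈ M, if Σ_{i=1}^n x_i m_i = 0 then m_i ∈ J_x M for every i. Then for every m ∈ M, if Δ·m ∈ J_x M, then m ∈ J_u M. -/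
/-!
Let `E` be the exterior algebra of `B ^ n`, let `T = E ⊗ M`, and let `D` be the Koszul differential
of `T`, that is, contraction with the functional `u : v ↦ ∑ v j * u j`. Write `ω l` for the wedge
product of the rows `W i` of the matrix over a list `l` of distinct indices. Since `u (W i) = x i`,
the derivation rule gives `D (ω (a :: l) ⊗ m) = x a • (ω l ⊗ m) + (multiples of x i with i ≠ a)`.

The proof shows that `ω l ⊗ m ∈ D T + J_x T` for all tails `l` of the list `0, …, n - 1`.
* For the full list, `ω l = Δ • top` with `top` the wedge of the standard basis, and `Δ • m ∈ J_x M`.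
* Removing the head (`tail_mem`): apply `D` to `ω (a :: l) ⊗ m = D η + ∑ x i • θ i`. As `D ∘ D = 0`,
  this is a relation among the `x i` in `T`, whose coefficient at `a` is `ω l ⊗ m - D (θ a)`. The
  hypothesis on relations passes from `M` to `T` because `E` is free (`relation_tensor`), so this
  coefficient lies in `J_x T`.
* For the empty list, `1 ⊗ m ∈ D T + J_x T ⊆ J_u T`, and the augmentation `E → B` gives `m ∈ J_u M`.
-/

open TensorProduct

namespace KoszulDescent

variable {B : Type*} [CommRing B] {M : Type*} [AddCommGroup M] [Module B M] {n : ℕ}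

theorem map_mem_smul_top {N P : Type*} [AddCommGroup N] [Module B N] [AddCommGroup P] [Module B P]
    (J : Ideal B) (f : N →ₗ[B] P) {y : N} (hy : y ∈ J • (⊤ : Submodule B N)) :
    f y ∈ J • (⊤ : Submodule B P) := by
  have h := Submodule.mem_map_of_mem (f := f) hy
  rw [Submodule.map_smul''] at h
  exact Submodule.smul_mono le_rfl le_top h

theorem mem_span_range_smul_top {N : Type*} [AddCommGroup N] [Module B N] (x : Fin n → B) {y : N}
    (hy : y ∈ Ideal.span (Set.range x) • (⊤ : Submodule B N)) :
    ∃ θ : Fin n → N, y = ∑ i, x i • θ i := by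
  induction hy using Submodule.smul_induction_on' with
  | smul r hr z _ =>
    obtain ⟨c, rfl⟩ := (Ideal.mem_span_range_iff_exists_fun).1 hr
    exact ⟨fun i => c i • z, by simp [Finset.sum_smul, smul_smul, mul_comm]⟩
  | add a _ b _ ha hb =>
    obtain ⟨θ, rfl⟩ := ha
    obtain ⟨θ', rfl⟩ := hb
    exact ⟨fun i => θ i + θ' i, by simp [Finset.sum_add_distrib]⟩

/-- The hypothesis on relations among the `x i` passes from `M` to `F ⊗ M` for `F` free, since
`F ⊗ M` is a direct sum of copies of `M`. -/
theorem relation_tensor {F κ : Type*} [AddCommGroup F] [Module B F] (b : Module.Basis κ B F)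
    (x : Fin n → B)
    (hrel : ∀ m : Fin n → M, (∑ i, x i • m i) = 0 →
      ∀ i, m i ∈ Ideal.span (Set.range x) • (⊤ : Submodule B M))
    (t : Fin n → F ⊗[B] M) (ht : ∑ i, x i • t i = 0) (i : Fin n) :
    t i ∈ Ideal.span (Set.range x) • (⊤ : Submodule B (F ⊗[B] M)) := by
  classical
  let φ := TensorProduct.equivFinsuppOfBasisLeft (N := M) b
  have hcoord : ∀ k, φ (t i) k ∈ Ideal.span (Set.range x) • (⊤ : Submodule B M) := by
    intro k
    refine hrel (fun i => φ (t i) k) ?_ i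
    have h := congrArg (fun y => φ y k) ht
    simpa [map_sum, Finsupp.finsetSum_apply] using h
  have hφ : φ (t i) ∈ Ideal.span (Set.range x) • (⊤ : Submodule B (κ →₀ M)) := by
    rw [← Finsupp.sum_single (φ (t i))]
    exact Submodule.sum_mem _ fun k _ => map_mem_smul_top _ (Finsupp.lsingle k) (hcoord k)
  simpa using map_mem_smul_top _ φ.symm.toLinearMap hφ

/-- The functional `v ↦ ∑ j, v j * u j` on `B ^ n`. -/
def functional (u : Fin n → B) : Module.Dual B (Fin n → B) :=
  ∑ j, u j • LinearMap.proj j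

theorem functional_apply (u v : Fin n → B) : functional u v = ∑ j, v j * u j := by
  simp [functional, mul_comm]

/-- The Koszul differential of `u` on the exterior algebra of `B ^ n`: contraction with the
functional given by `u`. -/
noncomputable def koszul (u : Fin n → B) :
    ExteriorAlgebra B (Fin n → B) →ₗ[B] ExteriorAlgebra B (Fin n → B) :=
  CliffordAlgebra.contractLeft (functional u)

theorem koszul_koszul (u : Fin n → B) (e : ExteriorAlgebra B (Fin n → B)) :
    koszul u (koszul u e) = 0 :=
  CliffordAlgebra.contractLeft_contractLeft _ _

theorem koszul_ι_mul (u v : Fin n → B) (e : ExteriorAlgebra B (Fin n → B)) :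
    koszul u (ExteriorAlgebra.ι B v * e) =
      (∑ j, v j * u j) • e - ExteriorAlgebra.ι B v * koszul u e := by
  rw [← functional_apply]
  exact CliffordAlgebra.contractLeft_ι_mul _ _ _

theorem koszul_rTensor_rTensor (u : Fin n → B) (t : ExteriorAlgebra B (Fin n → B) ⊗[B] M) :
    (koszul u).rTensor M ((koszul u).rTensor M t) = 0 := by
  induction t with
  | zero => simp
  | tmul e m => simp [koszul_koszul]
  | add a b ha hb => simp [ha, hb]

theorem koszul_rTensor_mem (u : Fin n → B) (t : ExteriorAlgebra B (Fin n → B) ⊗[B] M) :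
    (koszul u).rTensor M t ∈ Ideal.span (Set.range u) •
      (⊤ : Submodule B (ExteriorAlgebra B (Fin n → B) ⊗[B] M)) := by
  induction t with
  | zero => simp
  | add a b ha hb => rw [map_add]; exact Submodule.add_mem _ ha hb
  | tmul e m =>
    have h : koszul u e ∈ Ideal.span (Set.range u) •
        (⊤ : Submodule B (ExteriorAlgebra B (Fin n → B))) := by
      simp only [koszul, functional, map_sum, map_smul, LinearMap.sum_apply, LinearMap.smul_apply]
      exact Submodule.sum_mem _ fun j _ =>
        Submodule.smul_mem_smul (Ideal.subset_span ⟨j, rfl⟩) trivial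
    exact map_mem_smul_top _ ((TensorProduct.mk B _ M).flip m) h

/-- The wedge product of the rows of `W` over a list of row indices. -/
noncomputable def wedge (W : Matrix (Fin n) (Fin n) B) (l : List (Fin n)) :
    ExteriorAlgebra B (Fin n → B) :=
  (l.map fun i => ExteriorAlgebra.ι B (W i)).prod

/-- The differential of a wedge of rows only involves the `x i` whose rows occur in it. -/
theorem koszul_wedge (x u : Fin n → B) (W : Matrix (Fin n) (Fin n) B)
    (hxWu : ∀ i, x i = ∑ j, W i j * u j) (l : List (Fin n)) :
    ∃ g : Fin n → ExteriorAlgebra B (Fin n → B),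
      (∀ i, i ∉ l → g i = 0) ∧ koszul u (wedge W l) = ∑ i, x i • g i := by
  induction l with
  | nil =>
    exact ⟨0, by simp, by simp [wedge, koszul]⟩
  | cons a l ih =>
    obtain ⟨g, hg, hd⟩ := ih
    refine ⟨fun i => (if i = a then wedge W l else 0) - ExteriorAlgebra.ι B (W a) * g i, ?_, ?_⟩
    · intro i hi
      rw [List.mem_cons, not_or] at hi
      simp [hi.1, hg i hi.2]
    · have : wedge W (a :: l) = ExteriorAlgebra.ι B (W a) * wedge W l := by simp [wedge]
      rw [this, koszul_ι_mul, hd, ← hxWu]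
      simp [smul_sub, Finset.sum_sub_distrib, Finset.mul_sum]

/-- If `ω (a :: l) ⊗ m` lies in `D T + J_x T`, then so does `ω l ⊗ m`. -/
theorem tail_mem (x u : Fin n → B) (W : Matrix (Fin n) (Fin n) B)
    (hxWu : ∀ i, x i = ∑ j, W i j * u j)
    (hrel : ∀ m : Fin n → M, (∑ i, x i • m i) = 0 →
      ∀ i, m i ∈ Ideal.span (Set.range x) • (⊤ : Submodule B M))
    (m : M) (a : Fin n) (l : List (Fin n)) (ha : a ∉ l)
    (h : ∃ η, wedge W (a :: l) ⊗ₜ[B] m - (koszul u).rTensor M η ∈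
      Ideal.span (Set.range x) • (⊤ : Submodule B (ExteriorAlgebra B (Fin n → B) ⊗[B] M))) :
    ∃ η, wedge W l ⊗ₜ[B] m - (koszul u).rTensor M η ∈
      Ideal.span (Set.range x) • (⊤ : Submodule B (ExteriorAlgebra B (Fin n → B) ⊗[B] M)) := by
  obtain ⟨η, hη⟩ := h
  obtain ⟨θ, hθ⟩ := mem_span_range_smul_top x hη
  obtain ⟨g, hg, hd⟩ := koszul_wedge x u W hxWu l
  refine ⟨θ a, ?_⟩
  have hcons : wedge W (a :: l) = ExteriorAlgebra.ι B (W a) * wedge W l := by simp [wedge]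
  have hD := congrArg ((koszul u).rTensor M) hθ
  rw [map_sub, koszul_rTensor_rTensor, sub_zero, LinearMap.rTensor_tmul, hcons, koszul_ι_mul, hd,
    ← hxWu] at hD
  have key := relation_tensor ((Pi.basisFun B (Fin n)).ExteriorAlgebra) x hrel
    (fun i => (if i = a then wedge W l ⊗ₜ[B] m else 0)
      - (ExteriorAlgebra.ι B (W a) * g i) ⊗ₜ[B] m - (koszul u).rTensor M (θ i)) (by
      simp only [smul_sub, Finset.sum_sub_distrib]
      rw [sub_eq_zero]
      simp only [map_sum, map_smul] at hD
      rw [← hD]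
      simp [TensorProduct.sub_tmul, TensorProduct.sum_tmul, Finset.mul_sum,
        TensorProduct.smul_tmul']) a
  simpa [hg a ha] using key

/-- The wedge of all rows of `W` is `det W` times the wedge of the standard basis. -/
theorem wedge_finRange (W : Matrix (Fin n) (Fin n) B) :
    wedge W (List.finRange n) =
      W.det • ExteriorAlgebra.ιMulti B n (Pi.basisFun B (Fin n)) := by
  let e := Pi.basisFun B (Fin n)
  let f := ExteriorAlgebra.ιMulti B n (M := Fin n → B)
  have hf : f = (LinearMap.toSpanSingleton B _ (f e)).compAlternatingMap e.det := by
    refine Module.Basis.ext_alternating e fun i h => ?_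
    let σ : Equiv.Perm (Fin n) := Equiv.ofBijective i (Finite.injective_iff_bijective.1 h)
    change f (e ∘ σ) = (LinearMap.toSpanSingleton B _ (f e)).compAlternatingMap e.det (e ∘ σ)
    rw [AlternatingMap.map_perm, AlternatingMap.map_perm]
    simp [Module.Basis.det_self]
  have hW : f (fun i => W i) = W.det • f e := by
    have h := congrArg (fun k => k (fun i => W i)) hf
    have hdet : e.det (fun i => W i) = W.det := Pi.basisFun_det_apply W
    rw [← hdet]
    exact h
  refine Eq.trans ?_ hW
  refine Eq.trans ?_ (ExteriorAlgebra.ιMulti_apply (R := B) (fun i => W i)).symm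
  rw [wedge, List.ofFn_eq_map]

end KoszulDescent

open KoszulDescent

theorem stmt_4 (B : Type*) [CommRing B] (M : Type*) [AddCommGroup M] [Module B M]
    (n : ℕ) (hn : 0 < n) (x u : Fin n → B) (W : Matrix (Fin n) (Fin n) B)
    (hxWu : ∀ i, x i = ∑ j, W i j * u j)
    (hrel : ∀ m : Fin n → M, (∑ i, x i • m i) = 0 →
      ∀ i, m i ∈ Ideal.span (Set.range x) • (⊤ : Submodule B M)) :
    ∀ m : M, W.det • m ∈ Ideal.span (Set.range x) • (⊤ : Submodule B M) →
      m ∈ Ideal.span (Set.range u) • (⊤ : Submodule B M) := by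
  intro m hm
  have htop : ∃ η, wedge W (List.finRange n) ⊗ₜ[B] m - (koszul u).rTensor M η ∈
      Ideal.span (Set.range x) • (⊤ : Submodule B (ExteriorAlgebra B (Fin n → B) ⊗[B] M)) := by
    refine ⟨0, ?_⟩
    rw [map_zero, sub_zero, wedge_finRange, TensorProduct.smul_tmul]
    exact map_mem_smul_top _ (TensorProduct.mk B (ExteriorAlgebra B (Fin n → B)) M
      (ExteriorAlgebra.ιMulti B n (Pi.basisFun B (Fin n)))) hm
  have hdescent : ∀ l : List (Fin n), l.Nodup →
      (∃ η, wedge W l ⊗ₜ[B] m - (koszul u).rTensor M η ∈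
        Ideal.span (Set.range x) • (⊤ : Submodule B (ExteriorAlgebra B (Fin n → B) ⊗[B] M))) →
      ∃ η, wedge W [] ⊗ₜ[B] m - (koszul u).rTensor M η ∈
        Ideal.span (Set.range x) • (⊤ : Submodule B (ExteriorAlgebra B (Fin n → B) ⊗[B] M)) := by
    intro l
    induction l with
    | nil => exact fun _ h => h
    | cons a l ih =>
      intro hl h
      rw [List.nodup_cons] at hl
      exact ih hl.2 (tail_mem x u W hxWu hrel m a l hl.1 h)
  obtain ⟨η, hη⟩ := hdescent _ (List.nodup_finRange n) htop
  have hxu : Ideal.span (Set.range x) ≤ Ideal.span (Set.range u) := by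
    rw [Ideal.span_le]
    rintro _ ⟨i, rfl⟩
    rw [hxWu i]
    exact Ideal.sum_mem _ fun j _ => Ideal.mul_mem_left _ _ (Ideal.subset_span ⟨j, rfl⟩)
  have h1 := Submodule.add_mem _ (Submodule.smul_mono hxu le_rfl hη) (koszul_rTensor_mem u η)
  rw [sub_add_cancel] at h1
  simpa [wedge] using map_mem_smul_top _ ((TensorProduct.lid B M).toLinearMap ∘ₗ
    (ExteriorAlgebra.algebraMapInv (R := B) (M := Fin n → B)).toLinearMap.rTensor M) h1
end

section
/- Let R be an Artinian local (commutative) ring which is Gorenstein and contains a field. Then an R-module M is flat over R if and only if M is weakly torsion-free over R. -/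
/-!
A flat module is weakly torsion-free over any local ring: the equational criterion writes `y` with
`l • y = 0` as a combination of elements of `M` with coefficients annihilated by `l`, and if
`l ≠ 0` these coefficients are non-units.

Conversely, lift a basis of `M / mM` over the residue field to a family `v` in `M`. It spans `M`,
since the maximal ideal `m` is nilpotent (`span_eq_top_of_sup_smul`). It is also linearly
independent: a nonzero relation `c` has a nonzero multiple `r • c` annihilated by `m`
(`exists_smul_ne_zero_forall_smul_eq_zero`), so its coefficients lie in the socle `(x)`, and
`r • c = x • d`. Weak torsion-freeness applied to `x • ∑ d i • v i = 0` puts `∑ d i • v i` in `mM`,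
so every `d i` lies in `m`, whence `x • d = 0`, a contradiction. Thus `M` is free.
-/

/-- The socle of a local ring `R`: the annihilator of the maximal ideal,
i.e. `{x : R | ∀ a ∈ m_R, a * x = 0}`. -/
def socle (R : Type*) [CommRing R] [IsLocalRing R] : Ideal R :=
  (⊥ : Submodule R R).colon (IsLocalRing.maximalIdeal R)

/-- An Artinian local ring is Gorenstein iff its socle is a one-dimensional vector
space over the residue field, i.e. it is generated by a single nonzero element
(the maximal ideal acts trivially on the socle, so the `R`-span of such an element
coincides with its residue-field span). -/
def IsGorensteinArtinLocal (R : Type*) [CommRing R] [IsLocalRing R] : Prop :=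
  ∃ x : R, x ≠ 0 ∧ socle R = Ideal.span {x}

/-- A module `M` over a local ring `R` is weakly torsion-free if `λ • m = 0` implies
`λ = 0` or `m ∈ m_R M`. -/
def WeaklyTorsionFree (R : Type*) [CommRing R] [IsLocalRing R]
    (M : Type*) [AddCommGroup M] [Module R M] : Prop :=
  ∀ (l : R) (m : M), l • m = 0 →
    l = 0 ∨ m ∈ IsLocalRing.maximalIdeal R • (⊤ : Submodule R M)

open IsLocalRing

/-- Nakayama's lemma for a nilpotent ideal and an arbitrary module. -/
lemma span_eq_top_of_sup_smul {R M : Type*} [CommRing R] [AddCommGroup M] [Module R M]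
    {I : Ideal R} (hI : IsNilpotent I) (S : Submodule R M)
    (h : S ⊔ I • (⊤ : Submodule R M) = ⊤) : S = ⊤ := by
  obtain ⟨n, hn⟩ := hI
  have key : ∀ n : ℕ, S ⊔ I ^ n • (⊤ : Submodule R M) = ⊤ := by
    intro n
    induction n with
    | zero => simp
    | succ k ih =>
      refine eq_top_iff.2 (ih.ge.trans ?_)
      refine sup_le le_sup_left ?_
      calc I ^ k • (⊤ : Submodule R M) = I ^ k • (S ⊔ I • (⊤ : Submodule R M)) := by rw [h]
        _ = I ^ k • S ⊔ I ^ (k + 1) • (⊤ : Submodule R M) := by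
          rw [Submodule.smul_sup, ← Submodule.mul_smul, pow_succ]
        _ ≤ S ⊔ I ^ (k + 1) • (⊤ : Submodule R M) := sup_le_sup_right Submodule.smul_le_right _
  have := key n
  rw [hn] at this
  simpa using this

/-- With `I` nilpotent, every nonzero vector has a nonzero multiple annihilated by `I`. -/
lemma exists_smul_ne_zero_forall_smul_eq_zero {R N : Type*} [CommRing R] [AddCommGroup N]
    [Module R N] {I : Ideal R} (hI : IsNilpotent I) {c : N} (hc : c ≠ 0) :
    ∃ r : R, r • c ≠ 0 ∧ ∀ a ∈ I, a • r • c = 0 := by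
  classical
  have hex : ∃ n : ℕ, ∀ r ∈ I ^ n, r • c = 0 := by
    obtain ⟨n, hn⟩ := hI
    refine ⟨n, fun r hr => ?_⟩
    rw [hn] at hr
    have : r = 0 := by simpa using hr
    simp [this]
  -- Take `r` in the last power of `I` that does not annihilate `c`.
  have hspec := Nat.find_spec hex
  have hpos : Nat.find hex ≠ 0 := by
    intro h0
    rw [h0] at hspec
    exact hc (by simpa using hspec 1 (by simp))
  obtain ⟨k, hk⟩ := Nat.exists_eq_succ_of_ne_zero hpos
  have hmin := Nat.find_min hex (m := k) (by omega)
  push Not at hmin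
  obtain ⟨r, hr, hrc⟩ := hmin
  refine ⟨r, hrc, fun a ha => ?_⟩
  rw [← mul_smul]
  apply hspec
  rw [hk, Nat.succ_eq_add_one, pow_succ, mul_comm a r]
  exact Ideal.mul_mem_mul hr ha

lemma WeaklyTorsionFree.of_flat (R : Type*) [CommRing R] [IsLocalRing R]
    (M : Type*) [AddCommGroup M] [Module R M] [Module.Flat R M] : WeaklyTorsionFree R M := by
  intro l y hly
  by_cases hl : l = 0
  · exact Or.inl hl
  right
  have htriv := Module.Flat.isTrivialRelation_of_sum_smul_eq_zero (R := R) (M := M) (f := fun _ : Unit => l)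
    (x := fun _ : Unit => y) (by simpa using hly)
  obtain ⟨k, a, z, hz, ha⟩ := htriv
  rw [show y = _ from hz ()]
  refine Submodule.sum_mem _ fun j _ => Submodule.smul_mem_smul ?_ trivial
  rw [mem_maximalIdeal, mem_nonunits_iff]
  intro hu
  have h0 : l * a () j = 0 := by simpa using ha j
  exact hl (hu.mul_left_eq_zero.mp h0)

lemma WeaklyTorsionFree.free {R : Type*} [CommRing R] [IsLocalRing R] [IsArtinianRing R]
    (hGor : IsGorensteinArtinLocal R) {M : Type*} [AddCommGroup M] [Module R M]
    (hM : WeaklyTorsionFree R M) : Module.Free R M := by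
  obtain ⟨x, hx0, hx⟩ := hGor
  have hnil : IsNilpotent (maximalIdeal R) := by
    rw [← jacobson_eq_maximalIdeal ⊥ bot_ne_top]
    exact IsArtinianRing.isNilpotent_jacobson_bot
  have hsoc : ∀ s : R, (∀ a ∈ maximalIdeal R, a * s = 0) ↔ x ∣ s := by
    intro s
    rw [← Ideal.mem_span_singleton, ← hx, socle, Submodule.mem_colon]
    simp [mul_comm s]
  let _ : Field (R ⧸ maximalIdeal R) := Ideal.Quotient.field _
  let W := M ⧸ (maximalIdeal R • (⊤ : Submodule R M))
  let b := Module.Basis.ofVectorSpace (R ⧸ maximalIdeal R) W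
  choose v hv using fun i => Submodule.mkQ_surjective (maximalIdeal R • (⊤ : Submodule R M)) (b i)
  have hspan : Submodule.span R (Set.range v) = ⊤ := by
    refine span_eq_top_of_sup_smul hnil _ ?_
    have hmap : (Submodule.span R (Set.range v)).map
        (maximalIdeal R • (⊤ : Submodule R M)).mkQ = ⊤ := by
      have hrange : (maximalIdeal R • (⊤ : Submodule R M)).mkQ '' Set.range v = Set.range b := by
        rw [← Set.range_comp]
        exact congrArg Set.range (funext hv)
      rw [Submodule.map_span, hrange]
      have h1 := Submodule.restrictScalars_span R (R ⧸ maximalIdeal R)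
        Ideal.Quotient.mk_surjective (Set.range b)
      rw [b.span_eq] at h1
      rw [← h1]
      simp
    have hcomap := congrArg (Submodule.comap (maximalIdeal R • (⊤ : Submodule R M)).mkQ) hmap
    rwa [Submodule.comap_map_mkQ, Submodule.comap_top, sup_comm] at hcomap
  have hli : LinearIndependent R v := by
    rw [linearIndependent_iff]
    intro c hc
    by_contra hc0
    obtain ⟨r, hrc, hann⟩ := exists_smul_ne_zero_forall_smul_eq_zero hnil hc0
    have hdvd : ∀ i, ∃ d, (r • c) i = x * d := fun i =>
      (hsoc _).1 fun a ha => by simpa using DFunLike.congr_fun (hann a ha) i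
    choose d hd using hdvd
    have hsum : x • ∑ i ∈ c.support, d i • v i = 0 := by
      have h2 : r • Finsupp.linearCombination R v c = 0 := by rw [hc, smul_zero]
      rw [Finsupp.linearCombination_apply, Finsupp.sum, Finset.smul_sum] at h2
      rw [Finset.smul_sum, ← h2]
      refine Finset.sum_congr rfl fun i _ => ?_
      rw [smul_smul, smul_smul, ← hd i]
      rfl
    have hmem := (hM x _ hsum).resolve_left hx0
    have hzero : ∑ i ∈ c.support, Ideal.Quotient.mk (maximalIdeal R) (d i) • b i = 0 := by
      have h3 := (Submodule.Quotient.mk_eq_zero _).2 hmem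
      rw [← Submodule.mkQ_apply, map_sum] at h3
      rw [← h3]
      refine Finset.sum_congr rfl fun i _ => ?_
      rw [map_smul, hv]
      rfl
    have hdz := linearIndependent_iff'.1 b.linearIndependent _ _ hzero
    apply hrc
    ext i
    by_cases hi : i ∈ c.support
    · have hdm : d i ∈ maximalIdeal R := Ideal.Quotient.eq_zero_iff_mem.1 (hdz i hi)
      rw [hd i, mul_comm]
      exact (hsoc x).2 dvd_rfl _ hdm
    · simp [Finsupp.notMem_support_iff.1 hi]
  exact Module.Free.of_basis (Module.Basis.mk hli hspan.ge)

theorem stmt_6 (R : Type*) [CommRing R] [IsLocalRing R] [IsArtinianRing R]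
    (hGor : IsGorensteinArtinLocal R) (hfield : ∃ K : Subring R, IsField K)
    (M : Type*) [AddCommGroup M] [Module R M] :
    Module.Flat R M ↔ WeaklyTorsionFree R M := by
  refine ⟨fun _ => WeaklyTorsionFree.of_flat R M, fun h => ?_⟩
  have := h.free hGor
  infer_instance
end

section
/- Let φ : A → B be a local homomorphism of Noetherian local (commutative) rings with edim(B) ≤ edim(A), and let M be a nonzero B-module which is flat as an A-module, with either both A and B Artinian or M finitely generated as a B-module. Then the B/m_A B-module M/m_A M is weakly torsion-free over the local ring B/m_A B; that is, for every λ ∈ B and every m ∈ M, if λ·m ∈ m_A M then λ ∈ m_A B or m ∈ m_B M. -/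
/-! ### Formal smoothness of field extensions of a perfect field -/

open MvPolynomial in
/-- Vanishing of `H¹` of the cotangent complex in terms of the presentation of `L` with all of its
elements as variables: a relation all of whose partial derivatives vanish in `L` lies in the square
of the ideal of relations. -/
lemma subsingleton_h1Cotangent_iff (K L : Type*) [CommRing K] [CommRing L] [Algebra K L] :
    Subsingleton (Algebra.H1Cotangent K L) ↔ ∀ f : MvPolynomial L K,
      aeval (R := K) (id : L → L) f = 0 → (∀ i, aeval (R := K) (id : L → L) (pderiv i f) = 0) →
      f ∈ (RingHom.ker (aeval (R := K) (id : L → L))) ^ 2 := by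
  let P : Algebra.Generators K L L := Algebra.Generators.self K L
  have hker : P.toExtension.ker = RingHom.ker (aeval (R := K) (id : L → L)) := rfl
  have h0 : Subsingleton (Algebra.H1Cotangent K L) ↔
    Function.Injective P.toExtension.cotangentComplex := P.toExtension.subsingleton_h1Cotangent
  have key : ∀ x : P.toExtension.ker, P.toExtension.cotangentComplex (.mk x) = 0 ↔
      ∀ i, aeval (R := K) (id : L → L) (pderiv i (x.1 : MvPolynomial L K)) = 0 := by
    intro x
    rw [Algebra.Extension.cotangentComplex_mk, ← P.cotangentSpaceBasis.repr.map_eq_zero_iff,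
      Finsupp.ext_iff]
    refine forall_congr' fun i => ?_
    erw [Algebra.Generators.cotangentSpaceBasis_repr_one_tmul]
    rfl
  have key2 : ∀ x : P.toExtension.ker, Algebra.Extension.Cotangent.mk x = 0 ↔
      (x.1 : MvPolynomial L K) ∈ (RingHom.ker (aeval (R := K) (id : L → L))) ^ 2 := by
    intro x
    exact Ideal.toCotangent_eq_zero _ _
  rw [h0, injective_iff_map_eq_zero]
  constructor
  · intro h f hf hd
    exact (key2 ⟨f, hf⟩).1 (h _ ((key ⟨f, hf⟩).2 hd))
  · intro h x hx
    obtain ⟨x, rfl⟩ := Algebra.Extension.Cotangent.mk_surjective x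
    exact (key2 x).2 (h x.1 x.2 ((key x).1 hx))

open MvPolynomial in
/-- Every extension of a perfect field is formally smooth. A class in `H¹` involves only finitely
many elements of `L`, so it comes from a finitely generated subextension, where `H¹` vanishes. -/
lemma formallySmooth_of_perfectField (K L : Type*) [Field K] [PerfectField K] [Field L]
    [Algebra K L] :
    Algebra.FormallySmooth K L := by
  refine ⟨inferInstance, (subsingleton_h1Cotangent_iff K L).2 fun f hf hd => ?_⟩
  let L0 := IntermediateField.adjoin K (f.vars : Set L)
  have : Algebra.EssFiniteType K L0 :=
    IntermediateField.essFiniteType_iff.2 (IntermediateField.fg_adjoin_finset _)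
  have h0 := (subsingleton_h1Cotangent_iff K L0).1 Algebra.FormallySmooth.subsingleton_h1Cotangent
  obtain ⟨f0, hf0⟩ : ∃ f0 : MvPolynomial L0 K, rename (Subtype.val : L0 → L) f0 = f :=
    exists_rename_eq_of_vars_subset_range f _ Subtype.val_injective
      (by simp [L0])
  have hae : ∀ g : MvPolynomial L0 K, aeval (R := K) (id : L → L) (rename (Subtype.val : L0 → L) g)
      = L0.val (aeval (R := K) (id : L0 → L0) g) := by
    intro g
    rw [aeval_rename, MvPolynomial.comp_aeval_apply]
    rfl
  have hinj : ∀ b : L0, L0.val b = 0 → b = 0 := fun b hb => Subtype.ext hb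
  have h1 := h0 f0 (hinj _ (by rw [← hae, hf0, hf])) (fun i =>
    hinj _
      (by rw [← hae, ← hd i.1, ← hf0, pderiv_rename Subtype.val_injective]))
  have h2 := Ideal.mem_map_of_mem (rename (R := K) (Subtype.val : L0 → L)) h1
  rw [Ideal.map_pow, hf0] at h2
  refine Ideal.pow_right_mono (Ideal.map_le_iff_le_comap.2 fun g hg => ?_) 2 h2
  rw [Ideal.mem_comap, RingHom.mem_ker]
  exact (hae g).trans (by rw [(RingHom.mem_ker).1 hg, map_zero])

/-! ### The determinant is divisible by every nonzero element -/

open TensorProduct in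
/-- The duality argument in `C ⊗ C`: if `y` generates `C` as a `κ`-algebra, `a y = 0`, and the
annihilator of `l` lies in the kernel of an augmentation `φ` that kills `y`, then `l` divides
`det a`. -/
lemma det_mem_span_of_adjoin {κ C : Type*} [Field κ] [CommRing C] [Algebra κ C] {n : ℕ}
    (y : Fin n → C) (a : Matrix (Fin n) (Fin n) C) (hay : ∀ i, ∑ j, a i j * y j = 0)
    (hgen : Algebra.adjoin κ (Set.range y) = ⊤) (φ : C →ₐ[κ] κ) (hφ : ∀ j, φ (y j) = 0)
    (l : C) (hl : ∀ c, l * c = 0 → φ c = 0) : a.det ∈ Ideal.span {l} := by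
  let w : Fin n → C ⊗[κ] C := fun j => y j ⊗ₜ 1 - 1 ⊗ₜ y j
  have hw : ∀ c : C, c ⊗ₜ[κ] (1 : C) - 1 ⊗ₜ c ∈ Ideal.span (Set.range w) := by
    intro c
    have hc : c ∈ Algebra.adjoin κ (Set.range y) := hgen ▸ Algebra.mem_top
    induction hc using Algebra.adjoin_induction with
    | mem x hx =>
      obtain ⟨j, rfl⟩ := hx
      exact Ideal.subset_span ⟨j, rfl⟩
    | algebraMap r =>
      rw [Algebra.algebraMap_eq_smul_one, TensorProduct.smul_tmul, sub_self]
      exact zero_mem _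
    | add p q _ _ hp hq =>
      rw [TensorProduct.add_tmul, TensorProduct.tmul_add, add_sub_add_comm]
      exact add_mem hp hq
    | mul p q _ _ hp hq =>
      have : (p * q) ⊗ₜ[κ] (1 : C) - 1 ⊗ₜ (p * q) =
          (p ⊗ₜ 1) * (q ⊗ₜ 1 - 1 ⊗ₜ q) + (1 ⊗ₜ q) * (p ⊗ₜ 1 - 1 ⊗ₜ p) := by
        simp only [mul_sub, Algebra.TensorProduct.tmul_mul_tmul, mul_one, one_mul, mul_comm q p]
        ring
      rw [this]
      exact add_mem (Ideal.mul_mem_left _ _ hq) (Ideal.mul_mem_left _ _ hp)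
  have hh : ∀ c : C, ∃ h : Fin n → C ⊗[κ] C, ∑ k, h k * w k = c ⊗ₜ[κ] (1 : C) - 1 ⊗ₜ c := by
    intro c
    exact Ideal.mem_span_range_iff_exists_fun.1 (hw c)
  choose h hh using hh
  -- a lift of `a` along `id ⊗ φ`; the correction term makes `α w = (a y) ⊗ 1 - 1 ⊗ (a y) = 0`
  let α : Matrix (Fin n) (Fin n) (C ⊗[κ] C) :=
    fun i k => a i k ⊗ₜ 1 + ∑ j, h (a i j) k * (1 ⊗ₜ y j)
  have hα : α.mulVec w = 0 := by
    funext i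
    have e1 : ∑ k, α i k * w k = ∑ j, ((a i j * y j) ⊗ₜ[κ] (1 : C) - 1 ⊗ₜ (a i j * y j)) := by
      simp only [α, add_mul, Finset.sum_add_distrib, Finset.sum_mul]
      rw [Finset.sum_comm, ← Finset.sum_add_distrib]
      refine Finset.sum_congr rfl fun j _ => ?_
      have : ∑ k, h (a i j) k * (1 ⊗ₜ y j) * w k =
          (a i j ⊗ₜ[κ] (1 : C) - 1 ⊗ₜ a i j) * (1 ⊗ₜ y j) := by
        rw [← hh, Finset.sum_mul]
        exact Finset.sum_congr rfl fun k _ => by ring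
      rw [this]
      simp [w, mul_sub, sub_mul]
    rw [Finset.sum_sub_distrib, ← TensorProduct.sum_tmul, ← TensorProduct.tmul_sum, hay] at e1
    simpa [Matrix.mulVec, dotProduct] using e1
  have hβw : ∀ k, α.det * w k = 0 := by
    intro k
    have := congrFun (congrArg (α.adjugate.mulVec) hα) k
    rw [Matrix.mulVec_mulVec, Matrix.adjugate_mul, Matrix.smul_mulVec, Matrix.one_mulVec,
      Matrix.mulVec_zero] at this
    simpa using this
  have hβ : ∀ c : C, (c ⊗ₜ[κ] (1 : C)) * α.det = (1 ⊗ₜ c) * α.det := by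
    intro c
    rw [← sub_eq_zero, ← sub_mul, ← hh, Finset.sum_mul]
    exact Finset.sum_eq_zero fun k _ => by rw [mul_assoc, mul_comm (w k), hβw, mul_zero]
  -- `Φ ψ` contracts the second tensor factor with `ψ`
  let Φ : (C →ₗ[κ] κ) → (C ⊗[κ] C →ₗ[κ] C) := fun ψ =>
    (TensorProduct.rid κ C).toLinearMap ∘ₗ ψ.lTensor C
  have hΦ1 : ∀ ψ c x, Φ ψ ((c ⊗ₜ 1) * x) = c * Φ ψ x := by
    intro ψ c x
    induction x using TensorProduct.induction_on with
    | zero => simp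
    | tmul p q => simp [Φ]
    | add p q hp hq => rw [mul_add, map_add, hp, hq, map_add, mul_add]
  have hΦ2 : ∀ (ψ : C →ₗ[κ] κ) c x, Φ ψ ((1 ⊗ₜ c) * x) = Φ (ψ ∘ₗ LinearMap.mulLeft κ c) x := by
    intro ψ c x
    induction x using TensorProduct.induction_on with
    | zero => simp
    | tmul p q => simp [Φ]
    | add p q hp hq => rw [mul_add, map_add, hp, hq, map_add]
  obtain ⟨ψ, hψ⟩ : ∃ ψ : C →ₗ[κ] κ, ψ ∘ₗ LinearMap.mulLeft κ l = φ.toLinearMap := by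
    have hmem : φ.toLinearMap ∈ LinearMap.range (LinearMap.mulLeft κ l).dualMap := by
      rw [LinearMap.range_dualMap_eq_dualAnnihilator_ker, Submodule.mem_dualAnnihilator]
      exact fun c hc => hl c hc
    exact hmem
  -- `id ⊗ φ` as a ring homomorphism, to commute with the determinant
  let Ψ : C ⊗[κ] C →ₐ[κ] C :=
    (Algebra.TensorProduct.rid κ κ C).toAlgHom.comp (Algebra.TensorProduct.map (AlgHom.id κ C) φ)
  have hΨ : ∀ x, Ψ x = Φ φ.toLinearMap x := by
    intro x
    induction x using TensorProduct.induction_on with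
    | zero => simp
    | tmul p q => simp [Φ, Ψ]
    | add p q hp hq => rw [map_add, map_add, hp, hq]
  have hdet : Ψ α.det = a.det := by
    rw [AlgHom.map_det]
    congr 1
    ext i k
    change Ψ (α i k) = a i k
    simp [α, Ψ, hφ]
  refine Ideal.mem_span_singleton'.2 ⟨Φ ψ α.det, ?_⟩
  rw [← hdet, hΨ, ← hψ, ← hΦ2, ← hβ, hΦ1, mul_comm]

/-- If the augmentation ideal is nilpotent and generated by `y`, successive approximation shows that
`y` generates `C` as an algebra. -/
lemma adjoin_eq_top_of_nilpotent {κ C : Type*} [Field κ] [CommRing C] [Algebra κ C] {n : ℕ}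
    (y : Fin n → C) (φ : C →ₐ[κ] κ) (hφ : RingHom.ker φ = Ideal.span (Set.range y)) (s : ℕ)
    (hs : Ideal.span (Set.range y) ^ s = ⊥) : Algebra.adjoin κ (Set.range y) = ⊤ := by
  have key : ∀ N : ℕ, ∀ c : C, ∃ b ∈ Algebra.adjoin κ (Set.range y),
      c - b ∈ Ideal.span (Set.range y) ^ N := by
    intro N
    induction N with
    | zero => exact fun c => ⟨0, zero_mem _, by simp⟩
    | succ N ih =>
      intro c
      have h1 : c - algebraMap κ C (φ c) ∈ Ideal.span (Set.range y) := by
        rw [← hφ, RingHom.mem_ker]; simp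
      obtain ⟨d, hd⟩ := Ideal.mem_span_range_iff_exists_fun.1 h1
      choose b hb hb' using fun j => ih (d j)
      refine ⟨algebraMap κ C (φ c) + ∑ j, b j * y j, add_mem (algebraMap_mem _ _)
        (sum_mem fun j _ => mul_mem (hb j) (Algebra.subset_adjoin ⟨j, rfl⟩)), ?_⟩
      rw [← sub_sub, ← hd, ← Finset.sum_sub_distrib, pow_succ]
      refine sum_mem fun j _ => ?_
      rw [← sub_mul]
      exact Ideal.mul_mem_mul (hb' j) (Ideal.subset_span ⟨j, rfl⟩)
  refine eq_top_iff.2 fun c _ => ?_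
  obtain ⟨b, hb, hcb⟩ := key s c
  rw [hs, Ideal.mem_bot, sub_eq_zero] at hcb
  exact hcb ▸ hb

open IsLocalRing in
/-- The case of a nilpotent maximal ideal: a section of the residue map, which exists by formal
smoothness of the residue field over `F`, makes `C` an algebra over its residue field. -/
lemma det_mem_span_of_nilpotent (F : Type*) {C : Type*} [Field F] [PerfectField F] [CommRing C]
    [IsLocalRing C] [Algebra F C] {n : ℕ} (y : Fin n → C)
    (hy : Ideal.span (Set.range y) = maximalIdeal C)
    (s : ℕ) (hs : maximalIdeal C ^ s = ⊥)
    (a : Matrix (Fin n) (Fin n) C) (hay : ∀ i, ∑ j, a i j * y j = 0)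
    (l : C) (hl : l ≠ 0) : a.det ∈ Ideal.span {l} := by
  have := formallySmooth_of_perfectField F (ResidueField C)
  let g : C →ₐ[F] ResidueField C := IsScalarTower.toAlgHom F C (ResidueField C)
  have hg : Function.Surjective g := residue_surjective
  have hker : RingHom.ker g = maximalIdeal C := ker_residue
  have hnil : IsNilpotent (RingHom.ker (g : C →+* ResidueField C)) := ⟨s, by
    change (RingHom.ker g) ^ s = ⊥
    rw [hker, hs]⟩
  let σ := Algebra.FormallySmooth.liftOfSurjective (AlgHom.id F (ResidueField C)) g hg hnil
  have hσ : ∀ x, g (σ x) = x :=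
    Algebra.FormallySmooth.liftOfSurjective_apply (AlgHom.id F (ResidueField C)) g hg hnil
  let _ : Algebra (ResidueField C) C := σ.toRingHom.toAlgebra
  let φ : C →ₐ[ResidueField C] ResidueField C :=
    { (g : C →+* ResidueField C) with commutes' := hσ }
  have hφ : RingHom.ker φ = Ideal.span (Set.range y) := by
    rw [hy, ← hker]; rfl
  refine det_mem_span_of_adjoin y a hay (adjoin_eq_top_of_nilpotent y φ hφ s (by rw [hy, hs])) φ
    (fun j => ?_) l fun c hc => ?_
  · rw [← RingHom.mem_ker, hφ]
    exact Ideal.subset_span ⟨j, rfl⟩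
  · rw [← RingHom.mem_ker, hφ, hy, mem_maximalIdeal, mem_nonunits_iff]
    exact fun hu => hl (hu.mul_left_eq_zero.1 hc)

open IsLocalRing in
/-- Reduction to a nilpotent maximal ideal: `l` survives modulo a high power of the maximal ideal,
and `span {l}` is closed in the adic topology. -/
lemma det_mem_span_of_algebra (F : Type*) {C : Type*} [Field F] [PerfectField F] [CommRing C]
    [IsLocalRing C] [IsNoetherianRing C] [Algebra F C] {n : ℕ} (y : Fin n → C)
    (hy : Ideal.span (Set.range y) = maximalIdeal C)
    (a : Matrix (Fin n) (Fin n) C) (hay : ∀ i, ∑ j, a i j * y j = 0)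
    (l : C) (hl : l ≠ 0) : a.det ∈ Ideal.span {l} := by
  have hne : maximalIdeal C ≠ ⊤ := (maximalIdeal.isMaximal C).ne_top
  obtain ⟨s₀, hs₀⟩ : ∃ s, l ∉ maximalIdeal C ^ s := by
    by_contra! h
    refine hl ?_
    rw [← Ideal.mem_bot, ← Ideal.iInf_pow_eq_bot_of_isLocalRing _ hne]
    exact (Submodule.mem_iInf _).2 h
  have key : ∀ s, a.det ∈ Ideal.span {l} ⊔ maximalIdeal C ^ s := by
    intro s
    let I := maximalIdeal C ^ (s + s₀ + 1)
    have hI : I ≤ maximalIdeal C := Ideal.pow_le_self (by omega)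
    have : Nontrivial (C ⧸ I) := Ideal.Quotient.nontrivial_iff.2 fun h =>
      hne (top_le_iff.1 (h ▸ hI))
    have : IsLocalRing (C ⧸ I) :=
      IsLocalRing.of_surjective' (Ideal.Quotient.mk I) Ideal.Quotient.mk_surjective
    have hmap : (maximalIdeal C).map (Ideal.Quotient.mk I) = maximalIdeal (C ⧸ I) :=
      IsLocalRing.map_maximalIdeal_of_surjective _ Ideal.Quotient.mk_surjective
    have h := det_mem_span_of_nilpotent F (C := C ⧸ I) (fun j => Ideal.Quotient.mk I (y j))
      (by rw [← hmap, ← hy, Ideal.map_span, ← Set.range_comp]; rfl) (s + s₀ + 1)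
      (by rw [← hmap, ← Ideal.map_pow, Ideal.map_quotient_self])
      ((Ideal.Quotient.mk I).mapMatrix a)
      (fun i => by
        have := congrArg (Ideal.Quotient.mk I) (hay i)
        simpa using this)
      (Ideal.Quotient.mk I l)
      (fun h => hs₀ (Ideal.pow_le_pow_right (by omega) (Ideal.Quotient.eq_zero_iff_mem.1 h)))
    rw [← RingHom.map_det, ← Set.image_singleton, ← Ideal.map_span,
      ← Ideal.mem_comap, Ideal.comap_map_of_surjective _ Ideal.Quotient.mk_surjective,
      ← RingHom.ker_eq_comap_bot, Ideal.mk_ker] at h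
    exact (sup_le_sup_left (Ideal.pow_le_pow_right (by omega : s ≤ s + s₀ + 1))
      (Ideal.span {l})) h
  have h0 : Submodule.mkQ (Ideal.span {l}) a.det ∈
      (⨅ i : ℕ, maximalIdeal C ^ i • ⊤ : Submodule C (C ⧸ Ideal.span {l})) := by
    refine (Submodule.mem_iInf _).2 fun s => ?_
    obtain ⟨p, hp, q, hq, hpq⟩ := Submodule.mem_sup.1 (key s)
    have hp0 : Submodule.mkQ (Ideal.span {l}) p = 0 := (Submodule.Quotient.mk_eq_zero _).2 hp
    rw [← hpq, map_add, hp0, zero_add, ← mul_one q, ← smul_eq_mul,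
      map_smul]
    exact Submodule.smul_mem_smul hq trivial
  rw [Ideal.iInf_pow_smul_eq_bot_of_isLocalRing _ hne, Submodule.mem_bot] at h0
  exact (Submodule.Quotient.mk_eq_zero _).1 h0

open IsLocalRing in
/-- In a Noetherian local ring containing a field, let `y` generate the maximal ideal and let `a` be
a square matrix with `a y = 0`. Then `det a` is a multiple of every nonzero element. -/
lemma det_mem_span {k C : Type*} [Field k] [CommRing C] [IsLocalRing C]
    [IsNoetherianRing C] (f : k →+* C) {n : ℕ} (y : Fin n → C)
    (hy : Ideal.span (Set.range y) = maximalIdeal C)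
    (a : Matrix (Fin n) (Fin n) C) (hay : ∀ i, ∑ j, a i j * y j = 0)
    (l : C) (hl : l ≠ 0) : a.det ∈ Ideal.span {l} := by
  obtain ⟨p, hp⟩ := CharP.exists k
  rcases CharP.char_is_prime_or_zero k p with hpp | rfl
  · have : Fact p.Prime := ⟨hpp⟩
    let _ : Algebra (ZMod p) C := (f.comp (ZMod.castHom dvd_rfl k)).toAlgebra
    exact det_mem_span_of_algebra (ZMod p) y hy a hay l hl
  · have : CharZero k := CharP.charP_to_charZero k
    let _ : Algebra ℚ C := (f.comp (algebraMap ℚ k)).toAlgebra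
    exact det_mem_span_of_algebra ℚ y hy a hay l hl

/-! ### The Koszul complex -/

open IsLocalRing in
/-- If the linear relations between the `x i` have coefficients in the maximal ideal, i.e. `x` is
minimal, then so have those with coefficients in a flat module. -/
lemma mem_smul_top_of_sum_smul_eq_zero {A K : Type*} [CommRing A] [IsLocalRing A]
    [AddCommGroup K] [Module A K] [Module.Flat A K] {n : ℕ} (x : Fin n → A)
    (hmin : ∀ c : Fin n → A, ∑ i, x i * c i = 0 → ∀ i, c i ∈ maximalIdeal A)
    (k : Fin n → K) (h : ∑ i, x i • k i = 0) (i : Fin n) :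
    k i ∈ maximalIdeal A • (⊤ : Submodule A K) := by
  obtain ⟨r, c, z, hk, hc⟩ := Module.Flat.isTrivialRelation_of_sum_smul_eq_zero h
  rw [hk]
  exact sum_mem fun j _ => Submodule.smul_mem_smul (hmin (fun i => c i j) (hc j) i) trivial

lemma exists_sum_of_mem_smul_top {A K : Type*} [CommRing A] [AddCommGroup K] [Module A K] {n : ℕ}
    (x : Fin n → A) (k : K) (hk : k ∈ Ideal.span (Set.range x) • (⊤ : Submodule A K)) :
    ∃ u : Fin n → K, k = ∑ i, x i • u i := by
  induction hk using Submodule.smul_induction_on' with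
  | smul r hr z _ =>
    obtain ⟨c, hc⟩ := Ideal.mem_span_range_iff_exists_fun.1 hr
    refine ⟨fun i => c i • z, ?_⟩
    rw [← hc, Finset.sum_smul]
    exact Finset.sum_congr rfl fun i _ => by rw [smul_smul, mul_comm]
  | add p _ q _ hp hq =>
    obtain ⟨u, rfl⟩ := hp
    obtain ⟨v, rfl⟩ := hq
    exact ⟨fun i => u i + v i, by simp [smul_add, Finset.sum_add_distrib]⟩

lemma flat_tensor_of_basis {A B M E : Type*} [CommRing A] [CommRing B] [Algebra A B]
    [AddCommGroup M] [Module B M] [Module A M] [IsScalarTower A B M] [Module.Flat A M]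
    [AddCommGroup E] [Module B E] {ι : Type*} (b : Module.Basis ι B E) :
    Module.Flat A (TensorProduct B M E) := by
  classical
  let e : TensorProduct B M E ≃ₗ[B] (ι →₀ M) :=
    (TensorProduct.congr (LinearEquiv.refl B M) b.repr) ≪≫ₗ
      TensorProduct.finsuppScalarRight B B M ι
  have : Module.Flat A (ι →₀ M) :=
    Module.Flat.of_linearEquiv (finsuppLequivDFinsupp (ι := ι) (M := M) A)
  exact Module.Flat.of_linearEquiv (e.restrictScalars A)

/-- The degree-zero component of a Koszul boundary lies in every ideal that contains the values
of `d`. -/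
lemma algebraMapInv_contractLeft_mem_s7 {B V : Type*} [CommRing B] [AddCommGroup V] [Module B V]
    (d : Module.Dual B V) (I : Ideal B) (hd : ∀ v, d v ∈ I) (e : ExteriorAlgebra B V) :
    ExteriorAlgebra.algebraMapInv (CliffordAlgebra.contractLeft d e : ExteriorAlgebra B V) ∈ I := by
  induction e using CliffordAlgebra.left_induction with
  | algebraMap r => simp
  | add p q hp hq =>
    rw [map_add, map_add]
    exact add_mem hp hq
  | ι_mul e v _ =>
    rw [CliffordAlgebra.contractLeft_ι_mul, map_sub, map_smul, map_mul]
    have : ExteriorAlgebra.algebraMapInv (CliffordAlgebra.ι (0 : QuadraticForm B V) v :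
      ExteriorAlgebra B V) = 0 := by
      exact ExteriorAlgebra.lift_ι_apply _ _ _ _
    rw [this, zero_mul, sub_zero, smul_eq_mul]
    exact I.mul_mem_right _ (hd v)

/-- The Koszul differential of a product of distinct degree-one elements `a j` is a combination of
the `d (a j)`. Only the factors that occur contribute, and the coefficient of the first one is the
product of the remaining ones; this uses that the first factor does not occur again. -/
lemma contractLeft_prod {B V : Type*} [CommRing B] [AddCommGroup V] [Module B V]
    (d : Module.Dual B V) {n : ℕ} (a : Fin n → V) (i : Fin n) (L : List (Fin n))
    (hL : (i :: L).Nodup) :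
    ∃ w : Fin n → ExteriorAlgebra B V,
      (CliffordAlgebra.contractLeft d (((i :: L).map fun j => ExteriorAlgebra.ι B (a j)).prod) :
        ExteriorAlgebra B V) = ∑ j, d (a j) • w j ∧
      w i = (L.map fun j => ExteriorAlgebra.ι B (a j)).prod ∧ ∀ j, j ∉ i :: L → w j = 0 := by
  obtain ⟨w, hw, hw0⟩ : ∃ w : Fin n → ExteriorAlgebra B V,
      (CliffordAlgebra.contractLeft d ((L.map fun j => ExteriorAlgebra.ι B (a j)).prod) :
        ExteriorAlgebra B V) = ∑ j, d (a j) • w j ∧ ∀ j, j ∉ L → w j = 0 := by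
    cases L with
    | nil => exact ⟨0, by simp, by simp⟩
    | cons i' L' =>
      obtain ⟨w, h1, -, h2⟩ := contractLeft_prod d a i' L' (List.nodup_cons.1 hL).2
      exact ⟨w, h1, h2⟩
  have hi : w i = 0 := hw0 i (List.nodup_cons.1 hL).1
  refine ⟨fun j => (if j = i then (L.map fun j => ExteriorAlgebra.ι B (a j)).prod else 0) -
    ExteriorAlgebra.ι B (a i) * w j, ?_, by simp [hi], ?_⟩
  · rw [List.map_cons, List.prod_cons]
    erw [CliffordAlgebra.contractLeft_ι_mul]
    rw [hw]
    simp [smul_sub, Finset.sum_sub_distrib, Finset.mul_sum]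
  · intro j hj
    rw [List.mem_cons, not_or] at hj
    simp [hj.1, hw0 j hj.2]

open ExteriorAlgebra in
/-- The product of the rows of `a` in the exterior algebra is `det a` times the product of the
standard basis vectors: both are alternating in the rows and agree on the standard basis. -/
lemma prod_eq_det_smul {B : Type*} [CommRing B] {n : ℕ} (a : Matrix (Fin n) (Fin n) B) :
    (((List.finRange n).map fun j => ι B (a j)).prod : ExteriorAlgebra B (Fin n → B)) =
      a.det • ιMulti B n (fun i => Pi.single i (1 : B)) := by
  have h : ιMulti B n = (LinearMap.toSpanSingleton B _
      (ιMulti B n (fun i => Pi.single i (1 : B)))).compAlternatingMap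
      (Matrix.detRowAlternating (n := Fin n) (R := B)) := by
    refine Module.Basis.ext_alternating (Pi.basisFun B (Fin n)) fun v hv => ?_
    let σ : Equiv.Perm (Fin n) := Equiv.ofBijective v (Finite.injective_iff_bijective.1 hv)
    change ιMulti B n ((fun i => Pi.basisFun B (Fin n) i) ∘ σ) =
      ((LinearMap.toSpanSingleton B _
        (ιMulti B n (fun i => Pi.single i (1 : B)))).compAlternatingMap
      (Matrix.detRowAlternating (n := Fin n) (R := B))) ((fun i => Pi.basisFun B (Fin n) i) ∘ σ)
    rw [AlternatingMap.map_perm, AlternatingMap.map_perm]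
    congr 1
    have h1 : (fun i => Pi.basisFun B (Fin n) i) = (1 : Matrix (Fin n) (Fin n) B) := by
      ext i j
      simp [Matrix.one_apply, Pi.single_apply, eq_comm]
    have h2 : Matrix.detRowAlternating (fun i => Pi.basisFun B (Fin n) i) = 1 := by
      rw [h1]; exact Matrix.det_one
    rw [LinearMap.compAlternatingMap_apply, h2, LinearMap.toSpanSingleton_apply, one_smul]
    simp
  have := congrArg (fun f => f a) h
  rw [← List.ofFn_eq_map]
  exact (ιMulti_apply (R := B) (M := Fin n → B) a).symm.trans this

open IsLocalRing TensorProduct in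
/-- If `m ⊗ z_{i₁} ⋯ z_{iᵣ}`, for distinct `z_i = a i` with `∂ z_i = x i`, is a boundary modulo
`m_A`, then `m ∈ m_B M`. The factors are removed one at a time by applying the differential and
comparing coefficients of `x i`. -/
lemma mem_of_tmul_prod_eq {A B M : Type*} [CommRing A] [CommRing B] [IsLocalRing A] [IsLocalRing B]
    [Algebra A B] [AddCommGroup M]
    [Module B M] [Module A M] [IsScalarTower A B M] [Module.Flat A M] {n : ℕ} (x : Fin n → A)
    (hx : Ideal.span (Set.range x) = maximalIdeal A)
    (hmin : ∀ c : Fin n → A, ∑ i, x i * c i = 0 → ∀ i, c i ∈ maximalIdeal A)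
    (d : Module.Dual B (Fin n → B)) (hd : ∀ v, d v ∈ maximalIdeal B)
    (a : Fin n → (Fin n → B)) (ha : ∀ i, d (a i) = algebraMap A B (x i)) (m : M)
    (L : List (Fin n)) (hL : L.Nodup)
    (s v : M ⊗[B] ExteriorAlgebra B (Fin n → B))
    (hs : s ∈ maximalIdeal A • (⊤ : Submodule A (M ⊗[B] ExteriorAlgebra B (Fin n → B))))
    (h : m ⊗ₜ[B] (L.map fun j => ExteriorAlgebra.ι B (a j)).prod =
      s + (CliffordAlgebra.contractLeft (Q := (0 : QuadraticForm B (Fin n → B))) d).lTensor M v) :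
    m ∈ maximalIdeal B • (⊤ : Submodule B M) := by
  let E := ExteriorAlgebra B (Fin n → B)
  let D : E →ₗ[B] E := CliffordAlgebra.contractLeft (Q := (0 : QuadraticForm B (Fin n → B))) d
  induction L generalizing s v with
  | nil =>
    -- the projection to degree zero
    let π : M ⊗[B] E →ₗ[B] M := (TensorProduct.rid B M).toLinearMap ∘ₗ
      (ExteriorAlgebra.algebraMapInv (R := B) (M := Fin n → B)).toLinearMap.lTensor M
    have h1 := congrArg π h
    have h2 : π (m ⊗ₜ 1) = m := by simp [π]
    rw [List.map_nil, List.prod_nil, h2, map_add] at h1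
    rw [h1]
    refine add_mem ?_ ?_
    · rw [← hx] at hs
      obtain ⟨u, rfl⟩ := exists_sum_of_mem_smul_top x s hs
      rw [map_sum]
      refine sum_mem fun i _ => ?_
      rw [LinearMap.map_smul_of_tower, ← algebraMap_smul B (x i), ← ha]
      exact Submodule.smul_mem_smul (hd _) trivial
    · change π (D.lTensor M v) ∈ _
      clear h h1
      induction v using TensorProduct.induction_on with
      | zero => simp
      | tmul p e =>
        have : π (D.lTensor M (p ⊗ₜ e)) = ExteriorAlgebra.algebraMapInv (D e) • p := by simp [π]
        rw [this]
        exact Submodule.smul_mem_smul (algebraMapInv_contractLeft_mem_s7 d _ hd e) trivial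
      | add p q hp hq =>
        rw [map_add, map_add]
        exact add_mem hp hq
  | cons i L ih =>
    have : Module.Flat A (M ⊗[B] E) := flat_tensor_of_basis (Pi.basisFun B (Fin n)).ExteriorAlgebra
    obtain ⟨w, hw, hwi, -⟩ := contractLeft_prod d a i L hL
    rw [← hx] at hs
    obtain ⟨u, rfl⟩ := exists_sum_of_mem_smul_top x s hs
    have hDD : ∀ v, D.lTensor M (D.lTensor M v) = 0 := by
      intro v
      rw [← LinearMap.comp_apply, ← LinearMap.lTensor_comp]
      have : D ∘ₗ D = 0 := LinearMap.ext fun e => CliffordAlgebra.contractLeft_contractLeft d e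
      rw [this, LinearMap.lTensor_zero, LinearMap.zero_apply]
    have h1 : D.lTensor M (m ⊗ₜ[B] ((i :: L).map fun j => ExteriorAlgebra.ι B (a j)).prod) =
      D.lTensor M (∑ j, x j • u j + D.lTensor M v) := congrArg (D.lTensor M) h
    rw [map_add, hDD, add_zero, LinearMap.lTensor_tmul] at h1
    have h2 : D ((i :: L).map fun j => ExteriorAlgebra.ι B (a j)).prod = ∑ j, d (a j) • w j := hw
    rw [h2, TensorProduct.tmul_sum, map_sum, ← sub_eq_zero, ← Finset.sum_sub_distrib] at h1
    have h3 : ∑ j, x j • (m ⊗ₜ[B] w j - D.lTensor M (u j)) = 0 := by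
      rw [← h1]
      refine Finset.sum_congr rfl fun j _ => ?_
      rw [smul_sub, LinearMap.map_smul_of_tower, TensorProduct.tmul_smul, ha, algebraMap_smul]
    have h4 := mem_smul_top_of_sum_smul_eq_zero x hmin _ h3 i
    rw [hwi] at h4
    exact ih (List.nodup_cons.1 hL).2 _ (u i) h4 (sub_add_cancel _ _).symm

/-! ### Generators of the maximal ideals and the conclusion -/

open IsLocalRing in
lemma exists_finset_edim (R : Type*) [CommRing R] [IsLocalRing R] [IsNoetherianRing R] :
    ∃ s : Finset R, s.card = edim R ∧ Ideal.span (s : Set R) = maximalIdeal R := by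
  refine Nat.sInf_mem (s := {n : ℕ | ∃ s : Finset R, s.card = n ∧
    Ideal.span (s : Set R) = maximalIdeal R}) ?_
  obtain ⟨s, hs⟩ := IsNoetherian.noetherian (maximalIdeal R)
  exact ⟨_, s, rfl, hs⟩

open IsLocalRing in
/-- Generators of `m_A` of the minimal number; a unit coefficient in a relation between them would
make one of them superfluous. -/
lemma exists_min_gens (A : Type*) [CommRing A] [IsLocalRing A] [IsNoetherianRing A] :
    ∃ x : Fin (edim A) → A, Ideal.span (Set.range x) = maximalIdeal A ∧
      ∀ c : Fin (edim A) → A, ∑ i, x i * c i = 0 → ∀ i, c i ∈ maximalIdeal A := by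
  classical
  obtain ⟨s, hcard, hspan⟩ := exists_finset_edim A
  let e := s.equivFinOfCardEq hcard
  let x : Fin (edim A) → A := fun i => (e.symm i : A)
  have hxs : ∀ i, x i ∈ s := fun i => (e.symm i).2
  have hxinj : Function.Injective x := Subtype.val_injective.comp e.symm.injective
  have hrange : Set.range x = s := by
    ext z
    refine ⟨?_, fun hz => ⟨e ⟨z, hz⟩, by simp [x]⟩⟩
    rintro ⟨i, rfl⟩
    exact hxs i
  refine ⟨x, by rw [hrange, hspan], fun c hc i => ?_⟩
  by_contra hci
  have hu : IsUnit (c i) := by simpa using hci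
  have hxi : x i ∈ Ideal.span ((s.erase (x i) : Finset A) : Set A) := by
    rw [← Ideal.unit_mul_mem_iff_mem _ hu, mul_comm]
    rw [← Finset.add_sum_erase _ _ (Finset.mem_univ i)] at hc
    rw [eq_neg_of_add_eq_zero_left hc]
    refine neg_mem (sum_mem fun j hj => Ideal.mul_mem_right _ _ (Ideal.subset_span ?_))
    rw [Finset.mem_coe, Finset.mem_erase]
    exact ⟨fun h => (Finset.mem_erase.1 hj).1 (hxinj h), hxs j⟩
  have hle : edim A ≤ (s.erase (x i)).card := by
    refine Nat.sInf_le ⟨_, rfl, le_antisymm ?_ ?_⟩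
    · rw [← hspan]
      exact Ideal.span_mono (by simp)
    · rw [← hspan, Ideal.span_le]
      intro z hz
      by_cases hzx : z = x i
      · rw [hzx]; exact hxi
      · exact Ideal.subset_span (by simpa [hzx] using hz)
  have := Finset.card_erase_lt_of_mem (hxs i)
  omega

open IsLocalRing in
/-- For `n ≥ edim B` there are `n` generators of `m_B`, some of which may be zero. -/
lemma exists_gens (B : Type*) [CommRing B] [IsLocalRing B] [IsNoetherianRing B] (n : ℕ)
    (hn : edim B ≤ n) : ∃ y : Fin n → B, Ideal.span (Set.range y) = maximalIdeal B := by
  obtain ⟨t, hcard, hspan⟩ := exists_finset_edim B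
  have hlen : t.toList.length = edim B := by simp [hcard]
  refine ⟨fun i => t.toList.getD i 0, le_antisymm ?_ ?_⟩
  · rw [Ideal.span_le]
    rintro _ ⟨i, rfl⟩
    by_cases hi : (i : ℕ) < t.toList.length
    · have : t.toList.getD i 0 ∈ t := by
        rw [List.getD_eq_getElem _ _ hi]
        exact Finset.mem_toList.1 (List.getElem_mem hi)
      rw [← hspan]
      exact Ideal.subset_span this
    · change t.toList.getD i 0 ∈ _
      rw [List.getD_eq_default _ _ (by omega)]
      exact zero_mem _
  · rw [← hspan]
    refine Ideal.span_mono fun b hb => ?_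
    obtain ⟨i, hi, rfl⟩ := List.getElem_of_mem (Finset.mem_toList.2 hb)
    exact ⟨⟨i, by omega⟩, List.getD_eq_getElem _ _ hi⟩

open IsLocalRing TensorProduct in
/-- The flatness half of the argument: multiplication by the determinant of the transition matrix
from `y` to `x` is injective from `M / m_B M` to `M / m_A M`. -/
lemma mem_of_det_smul_mem {A B M : Type*} [CommRing A] [CommRing B] [IsLocalRing A] [IsLocalRing B]
    [Algebra A B] [AddCommGroup M]
    [Module B M] [Module A M] [IsScalarTower A B M] [Module.Flat A M] {n : ℕ} (x : Fin n → A)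
    (hx : Ideal.span (Set.range x) = maximalIdeal A)
    (hmin : ∀ c : Fin n → A, ∑ i, x i * c i = 0 → ∀ i, c i ∈ maximalIdeal A)
    (y : Fin n → B) (hy : ∀ j, y j ∈ maximalIdeal B)
    (a : Matrix (Fin n) (Fin n) B) (ha : ∀ i, ∑ j, a i j * y j = algebraMap A B (x i)) (m : M)
    (h : a.det • m ∈ (maximalIdeal A).map (algebraMap A B) • (⊤ : Submodule B M)) :
    m ∈ maximalIdeal B • (⊤ : Submodule B M) := by
  rw [← hx, Ideal.map_span, ← Set.range_comp] at h
  obtain ⟨u, hu⟩ := exists_sum_of_mem_smul_top _ _ h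
  refine mem_of_tmul_prod_eq x hx hmin (Fintype.linearCombination B y) (fun v => ?_) a (fun i => ?_)
    m (List.finRange n) (List.nodup_finRange n)
    (∑ i, x i • (u i ⊗ₜ[B] ExteriorAlgebra.ιMulti B n (fun i => Pi.single i (1 : B)))) 0 ?_ ?_
  · rw [Fintype.linearCombination_apply]
    exact sum_mem fun j _ => Ideal.mul_mem_left _ _ (hy j)
  · rw [← ha]; rfl
  · exact sum_mem fun i _ => Submodule.smul_mem_smul (hx ▸ Ideal.subset_span ⟨i, rfl⟩) trivial
  · rw [map_zero, add_zero]
    have e := prod_eq_det_smul a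
    refine (congrArg (fun z => m ⊗ₜ[B] z) e).trans ?_
    rw [TensorProduct.tmul_smul, TensorProduct.smul_tmul', hu, TensorProduct.sum_tmul]
    refine Finset.sum_congr rfl fun i _ => ?_
    rw [Function.comp_apply, ← TensorProduct.smul_tmul', algebraMap_smul]

theorem stmt_7 (A B : Type*) [CommRing A] [CommRing B]
    [IsLocalRing A] [IsLocalRing B] [IsNoetherianRing A] [IsNoetherianRing B]
    [Algebra A B] (hloc : IsLocalHom (algebraMap A B))
    (hedim : edim B ≤ edim A)
    (M : Type*) [AddCommGroup M] [Module B M] [Module A M] [IsScalarTower A B M]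
    (hM : Nontrivial M) (hflat : Module.Flat A M)
    (hcase : (IsArtinianRing A ∧ IsArtinianRing B) ∨ Module.Finite B M) :
    ∀ (l : B) (m : M),
      l • m ∈ (IsLocalRing.maximalIdeal A).map (algebraMap A B) • (⊤ : Submodule B M) →
      l ∈ (IsLocalRing.maximalIdeal A).map (algebraMap A B) ∨
        m ∈ IsLocalRing.maximalIdeal B • (⊤ : Submodule B M) := by
  intro l m hlm
  rw [or_iff_not_imp_left]
  intro hl
  obtain ⟨x, hx, hmin⟩ := exists_min_gens A
  obtain ⟨y, hy⟩ := exists_gens B (edim A) hedim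
  -- `C = B ⧸ J` is local, contains the residue field of `A`, and `a y = 0` holds in it
  let J := (IsLocalRing.maximalIdeal A).map (algebraMap A B)
  have hJ : J ≤ IsLocalRing.maximalIdeal B :=
    ((IsLocalRing.local_hom_TFAE (algebraMap A B)).out 0 2).1 hloc
  have hxJ : ∀ i, algebraMap A B (x i) ∈ J := fun i =>
    Ideal.mem_map_of_mem _ (hx ▸ Ideal.subset_span ⟨i, rfl⟩)
  have hex : ∀ i, ∃ r : Fin (edim A) → B, ∑ j, r j * y j = algebraMap A B (x i) := fun i =>
    Ideal.mem_span_range_iff_exists_fun.1 (hy ▸ hJ (hxJ i))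
  choose a ha using hex
  have : Nontrivial (B ⧸ J) := Ideal.Quotient.nontrivial_iff.2 fun h =>
    (IsLocalRing.maximalIdeal.isMaximal B).ne_top (top_le_iff.1 (h ▸ hJ))
  have : IsLocalRing (B ⧸ J) :=
    IsLocalRing.of_surjective' (Ideal.Quotient.mk J) Ideal.Quotient.mk_surjective
  have hmap : (IsLocalRing.maximalIdeal B).map (Ideal.Quotient.mk J) =
      IsLocalRing.maximalIdeal (B ⧸ J) :=
    IsLocalRing.map_maximalIdeal_of_surjective _ Ideal.Quotient.mk_surjective
  let f : IsLocalRing.ResidueField A →+* B ⧸ J :=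
    Ideal.quotientMap J (algebraMap A B) Ideal.le_comap_map
  have hdet := det_mem_span f (fun j => Ideal.Quotient.mk J (y j))
    (by rw [← hmap, ← hy, Ideal.map_span, ← Set.range_comp]; rfl)
    ((Ideal.Quotient.mk J).mapMatrix (Matrix.of a))
    (fun i => by
      have h := congrArg (Ideal.Quotient.mk J) (ha i)
      rw [Ideal.Quotient.eq_zero_iff_mem.2 (hxJ i)] at h
      simpa using h)
    (Ideal.Quotient.mk J l) (fun h => hl (Ideal.Quotient.eq_zero_iff_mem.1 h))
  rw [← RingHom.map_det, ← Set.image_singleton, ← Ideal.map_span,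
    ← Ideal.mem_comap, Ideal.comap_map_of_surjective _ Ideal.Quotient.mk_surjective,
    ← RingHom.ker_eq_comap_bot, Ideal.mk_ker] at hdet
  obtain ⟨p, hp, q, hq, hpq⟩ := Submodule.mem_sup.1 hdet
  obtain ⟨r, rfl⟩ := Ideal.mem_span_singleton'.1 hp
  refine mem_of_det_smul_mem x hx hmin y (fun j => hy ▸ Ideal.subset_span ⟨j, rfl⟩)
    (Matrix.of a) ha m ?_
  rw [← hpq, add_smul, mul_smul]
  exact add_mem (Submodule.smul_mem _ _ hlm) (Submodule.smul_mem_smul hq trivial)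
end

section
/- Let O be a Noetherian local (commutative) ring with maximal ideal m and residue field k. Let A be a finite O-algebra (i.e. finitely generated as an O-module) and let M be an A-module which is free of finite rank as an O-module. If M ⊗_O k is free as a module over A ⊗_O k, then M is free as an A-module. -/
/-!
Put `k = O/m`. Lift a basis of `M ⊗ k` over `A ⊗ k` (finite unless `A ⊗ k = 0`, in which case `A`
vanishes by Nakayama) to elements of `M`, and let `f : A^ι → M` be the resulting `A`-linear map.
Then `f ⊗ k` is bijective. By Nakayama `f` is surjective, and since `M` is `O`-projective, `f` has
an `O`-linear section `s`. As `(f ⊗ k) ∘ (s ⊗ k) = id` and `f ⊗ k` is bijective, `s ⊗ k` is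
surjective, so `s` is surjective by Nakayama once more. Hence `f` is bijective.
-/

open TensorProduct

section
variable (O k M : Type*) [CommRing O] [CommRing k] [Algebra O k]
  [AddCommGroup M] [Module O M]

/-- The action of `k` on `M ⊗[O] k` through the right factor. -/
noncomputable def rightModule : Module k (M ⊗[O] k) where
  smul c x := LinearMap.lTensor M (LinearMap.mul O k c) x
  one_smul x := by
    show LinearMap.lTensor M (LinearMap.mul O k 1) x = x
    rw [show (LinearMap.mul O k) 1 = LinearMap.id by ext; simp, LinearMap.lTensor_id]; rfl
  mul_smul a b x := by
    show LinearMap.lTensor M (LinearMap.mul O k (a * b)) x = _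
    rw [show (LinearMap.mul O k) (a * b) =
      ((LinearMap.mul O k) a).comp ((LinearMap.mul O k) b) by ext; simp [mul_assoc],
      LinearMap.lTensor_comp]
    rfl
  smul_zero a := by show LinearMap.lTensor M (LinearMap.mul O k a) 0 = 0; simp
  smul_add a x y := by
    show LinearMap.lTensor M (LinearMap.mul O k a) (x + y) = _; simp; rfl
  add_smul a b x := by
    show LinearMap.lTensor M (LinearMap.mul O k (a + b)) x = _
    rw [map_add, LinearMap.lTensor_add]; rfl
  zero_smul x := by
    show LinearMap.lTensor M (LinearMap.mul O k 0) x = 0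
    rw [map_zero, LinearMap.lTensor_zero]; rfl

variable (A : Type*) [CommRing A] [Algebra O A] [Module A M] [IsScalarTower O A M]

/-- The natural module structure of the base change `A ⊗[O] k` of `A`
on the base change `M ⊗[O] k` of an `A`-module `M`. -/
noncomputable def baseChangeModule : Module (A ⊗[O] k) (M ⊗[O] k) := by
  letI := rightModule O k M
  haveI h1 : SMulCommClass A k (M ⊗[O] k) := by
    constructor
    intro a c x
    induction x using TensorProduct.induction_on with
    | zero => simp
    | tmul m t =>
        show a • (LinearMap.lTensor M (LinearMap.mul O k c) (m ⊗ₜ[O] t))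
          = LinearMap.lTensor M (LinearMap.mul O k c) (a • m ⊗ₜ[O] t)
        rw [LinearMap.lTensor_tmul, TensorProduct.smul_tmul', TensorProduct.smul_tmul',
          LinearMap.lTensor_tmul]
    | add x y hx hy =>
        rw [smul_add, smul_add, hx, hy, ← smul_add, ← smul_add]
  haveI h2 : IsScalarTower O k (M ⊗[O] k) := by
    constructor
    intro o c x
    induction x using TensorProduct.induction_on with
    | zero => simp
    | tmul m t =>
        show LinearMap.lTensor M (LinearMap.mul O k (o • c)) (m ⊗ₜ[O] t)
          = o • LinearMap.lTensor M (LinearMap.mul O k c) (m ⊗ₜ[O] t)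
        simp only [LinearMap.lTensor_tmul, LinearMap.mul_apply', smul_mul_assoc,
          TensorProduct.tmul_smul]
    | add x y hx hy =>
        rw [smul_add, smul_add, hx, hy, smul_add]
  exact TensorProduct.Algebra.module

end

section
variable {O : Type*} [CommRing O]

lemma baseChangeModule_tmul_smul_tmul (k M A : Type*) [CommRing k] [Algebra O k]
    [AddCommGroup M] [Module O M] [CommRing A] [Algebra O A] [Module A M] [IsScalarTower O A M]
    (a : A) (c : k) (m : M) (t : k) :
    letI : Module (A ⊗[O] k) (M ⊗[O] k) := baseChangeModule O k M A
    (a ⊗ₜ[O] c) • (m ⊗ₜ[O] t) = (a • m) ⊗ₜ[O] (c * t) := rfl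

variable [IsLocalRing O]

lemma exists_tmul_one_eq {P : Type*} [AddCommGroup P] [Module O P]
    (x : P ⊗[O] IsLocalRing.ResidueField O) : ∃ p : P, p ⊗ₜ[O] 1 = x := by
  obtain ⟨p, hp⟩ := TensorProduct.mk_surjective O P (IsLocalRing.ResidueField O)
    IsLocalRing.residue_surjective (TensorProduct.comm O _ _ x)
  refine ⟨p, (TensorProduct.comm O _ _).injective ?_⟩
  rw [← hp]; simp

/-- Nakayama's lemma: surjectivity of a map to a finite module may be tested over the residue
field. -/
lemma surjective_of_rTensor_residueField {N P : Type*} [AddCommGroup N] [Module O N]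
    [AddCommGroup P] [Module O P] [Module.Finite O P] (g : N →ₗ[O] P)
    (hg : Function.Surjective (g.rTensor (IsLocalRing.ResidueField O))) :
    Function.Surjective g := by
  rw [← LinearMap.range_eq_top, ← IsLocalRing.map_tensorProduct_mk_eq_top, eq_top_iff]
  rintro y -
  obtain ⟨x, hx⟩ := hg (TensorProduct.comm O _ _ y)
  obtain ⟨n, rfl⟩ := exists_tmul_one_eq x
  refine ⟨g n, ⟨n, rfl⟩, (TensorProduct.comm O _ _).injective ?_⟩
  rw [← hx]; simp

/-- An `O`-linear map from a finite module to a projective finite module is bijective as soon as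
it is so over the residue field: a section of it is again surjective. -/
lemma bijective_of_rTensor_residueField {N P : Type*} [AddCommGroup N] [Module O N]
    [AddCommGroup P] [Module O P] [Module.Finite O N] [Module.Finite O P] [Module.Projective O P]
    (g : N →ₗ[O] P)
    (hg : Function.Bijective (g.rTensor (IsLocalRing.ResidueField O))) :
    Function.Bijective g := by
  have hsurj := surjective_of_rTensor_residueField g hg.2
  obtain ⟨s, hs⟩ := Module.projective_lifting_property g LinearMap.id hsurj
  have hs' : ∀ x, g (s x) = x := fun x ↦ LinearMap.congr_fun hs x
  have hssurj : Function.Surjective s := by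
    apply surjective_of_rTensor_residueField
    intro x
    refine ⟨g.rTensor _ x, hg.1 ?_⟩
    rw [← LinearMap.comp_apply (g.rTensor _), ← LinearMap.rTensor_comp, hs, LinearMap.rTensor_id,
      LinearMap.id_apply]
  refine ⟨fun x y hxy ↦ ?_, hsurj⟩
  obtain ⟨x, rfl⟩ := hssurj x
  obtain ⟨y, rfl⟩ := hssurj y
  rw [hs', hs'] at hxy
  rw [hxy]

end

theorem stmt_12 (O : Type*) [CommRing O] [IsLocalRing O] [IsNoetherianRing O]
    (A : Type*) [CommRing A] [Algebra O A] [Module.Finite O A]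
    (M : Type*) [AddCommGroup M] [Module A M] [Module O M] [IsScalarTower O A M]
    [Module.Free O M] [Module.Finite O M]
    (hfree : letI k := IsLocalRing.ResidueField O
      letI : Module (A ⊗[O] k) (M ⊗[O] k) := baseChangeModule O k M A
      Module.Free (A ⊗[O] k) (M ⊗[O] k)) :
    Module.Free A M := by
  let k := IsLocalRing.ResidueField O
  let instB : Module (A ⊗[O] k) (M ⊗[O] k) := baseChangeModule O k M A
  have hsmul : ∀ (a : A) (c : k) (m : M) (t : k),
      (a ⊗ₜ[O] c) • (m ⊗ₜ[O] t) = (a • m) ⊗ₜ[O] (c * t) :=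
    baseChangeModule_tmul_smul_tmul k M A
  have hfree' : Module.Free (A ⊗[O] k) (M ⊗[O] k) := hfree
  rcases subsingleton_or_nontrivial (A ⊗[O] k) with hB | hB
  · -- Here `A ⊗ k = 0`, so the zero map onto `A` is surjective modulo `m`, and `A = 0`.
    have h0 := surjective_of_rTensor_residueField (0 : A →ₗ[O] A)
      (fun y ↦ ⟨0, Subsingleton.elim (α := A ⊗[O] k) _ _⟩)
    obtain ⟨x, hx⟩ := h0 1
    have : Subsingleton A := subsingleton_of_zero_eq_one hx
    have : Subsingleton M := Module.subsingleton A M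
    infer_instance
  have hfin : Module.Finite (A ⊗[O] k) (M ⊗[O] k) := by
    obtain ⟨S, hS⟩ := Module.Finite.fg_top (R := O) (M := M)
    classical
    refine ⟨⟨S.image (fun m ↦ m ⊗ₜ[O] (1 : k)), eq_top_iff.mpr ?_⟩⟩
    rintro y -
    obtain ⟨m, rfl⟩ := exists_tmul_one_eq y
    have hm : m ∈ Submodule.span O (S : Set M) := hS ▸ Submodule.mem_top
    induction hm using Submodule.span_induction with
    | mem x hx => exact Submodule.subset_span (by simpa using ⟨x, hx, rfl⟩)
    | zero => rw [TensorProduct.zero_tmul]; exact Submodule.zero_mem _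
    | add x y _ _ hx hy => rw [TensorProduct.add_tmul]; exact Submodule.add_mem _ hx hy
    | smul r x _ hx =>
      have := Submodule.smul_mem _ (algebraMap O A r ⊗ₜ[O] (1 : k)) hx
      rwa [hsmul, algebraMap_smul, one_mul] at this
  obtain ⟨ι, ⟨b⟩⟩ := (Module.free_iff_set (A ⊗[O] k) (M ⊗[O] k)).mp hfree'
  classical
  have : Finite ι := Module.Finite.finite_basis b
  choose v hv using fun i ↦ exists_tmul_one_eq (b i)
  let f : (ι →₀ A) →ₗ[A] M := Finsupp.linearCombination A v
  -- Under `A^ι ⊗ k ≃ (A ⊗ k)^ι`, the map `f ⊗ k` is the coordinate isomorphism of `b`.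
  have key : ∀ x, (f.restrictScalars O).rTensor k x =
      b.repr.symm (TensorProduct.finsuppLeft O O A k ι x) := by
    intro x
    induction x using TensorProduct.induction_on with
    | zero => simp
    | add x y hx hy => simp only [map_add, hx, hy]
    | tmul p t =>
      induction p using Finsupp.induction_linear with
      | zero => simp
      | add p q hp hq => simp only [TensorProduct.add_tmul, map_add, hp, hq]
      | single i a =>
        have h1 : TensorProduct.finsuppLeft O O A k ι (Finsupp.single i a ⊗ₜ[O] t) =
            Finsupp.single i (a ⊗ₜ[O] t) := by
          rw [← TensorProduct.finsuppLeft_symm_apply_single (S := O), LinearEquiv.apply_symm_apply]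
        rw [h1, Module.Basis.repr_symm_single, ← hv, hsmul, mul_one, LinearMap.rTensor_tmul]
        simp [f]
  have hbij : Function.Bijective f := by
    refine bijective_of_rTensor_residueField (f.restrictScalars O) ?_
    rw [show ⇑((f.restrictScalars O).rTensor k) =
      ⇑b.repr.symm ∘ ⇑(TensorProduct.finsuppLeft O O A k ι) from funext key]
    exact b.repr.symm.bijective.comp (LinearEquiv.bijective _)
  exact Module.Free.of_equiv (LinearEquiv.ofBijective f hbij)
end

section
/- Let A and B be Noetherian local (commutative) rings and φ : A → B a ring homomorphism (not assumed local). Assume there exists a nonzero B-module M which is flat over A via φ and which is finitely generated as an A-module (or, alternatively, assume A is Artinian). Then φ is a local homomorphism, i.e. φ(m_A) ⊆ m_B. -/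
/-! Let `a` be a nonunit of `A` whose image in `B` is a unit. Multiplication by `a` is then
surjective on every `B`-module, so `M = m_A M`; if `M` is finite over `A`, Nakayama's lemma gives
`M = 0`. If instead `A` is Artinian, `a` is nilpotent, so its image is a nilpotent unit of the
nonzero ring `B`. Both conclusions are absurd. -/

theorem stmt_14 (A B : Type*) [CommRing A] [CommRing B] [IsLocalRing A] [IsLocalRing B]
    [IsNoetherianRing A] [IsNoetherianRing B] [Algebra A B]
    (M : Type*) [AddCommGroup M] [Module B M] [Module A M] [IsScalarTower A B M]
    (hM : Nontrivial M) (hflat : Module.Flat A M)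
    (hcase : Module.Finite A M ∨ IsArtinianRing A) :
    IsLocalHom (algebraMap A B) := by
  refine ⟨fun a ha => ?_⟩
  by_contra hna
  have ham : a ∈ IsLocalRing.maximalIdeal A := (IsLocalRing.mem_maximalIdeal a).2 hna
  rcases hcase with hfin | hart
  · have htop : (⊤ : Submodule A M) = ⊥ := by
      refine Submodule.eq_bot_of_le_smul_of_le_jacobson_bot (IsLocalRing.maximalIdeal A) ⊤
        hfin.fg_top ?_ (IsLocalRing.maximalIdeal_le_jacobson _)
      intro x _
      obtain ⟨b, hb⟩ := ha.exists_right_inv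
      have hx : x = a • (b • x) := by
        rw [← algebraMap_smul B a (b • x), smul_smul, hb, one_smul]
      rw [hx]
      exact Submodule.smul_mem_smul ham Submodule.mem_top
    exact top_ne_bot htop
  · have hnil : IsNilpotent a := by
      obtain ⟨n, hn⟩ := IsArtinianRing.isNilpotent_jacobson_bot (R := A)
      refine ⟨n, ?_⟩
      have h := Ideal.pow_mem_pow (IsLocalRing.maximalIdeal_le_jacobson ⊥ ham) n
      rw [hn] at h
      simpa using h
    exact (hnil.map (algebraMap A B)).not_isUnit ha
end
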